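/- Let X₀⁺ be a proper subshift of the one-sided full shift X⁺ = 𝒜^ℕ, and for i ≥ 0 set κ_i = 2^{−i} log |L_{2^i}(X₀⁺)| − h_top(X₀⁺). Let (a_j)_{j≥0} be a decreasing sequence of positive reals converging to 0 that satisfies a_{3j} ≥ (2 log j)/j + (1/j) Σ_{i=0}^{⌊log₂ j⌋} 2^i κ_i + 1/j for all j ≥ 1, and define φ⁺ : X⁺ → ℝ by φ⁺(x) = 0 if x ∈ X₀⁺ and φ⁺(x) = −a_j if dist(x, X₀⁺) = 2^{−j}. Then φ⁺ has a freezing phase transition at some β_c > 0, and ZTA(φ⁺) coincides with the set of measures of maximal entropy on X₀⁺. -/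

import Mathlib

open MeasureTheory Filter Topology
open scoped ENNReal Classical

namespace Freezing

/-- The one-sided configuration space `X⁺ = 𝒜^ℕ`. -/
abbrev Cfg1 (A : Type) : Type := ℕ → A

section Defs

variable {A : Type} [Fintype A] [TopologicalSpace A] [DiscreteTopology A]
  [MeasurableSpace A] [BorelSpace A]

/-- The one-sided shift `σ(x)_i = x_{i+1}`. -/
def shift1 (x : Cfg1 A) : Cfg1 A := fun i => x (i + 1)

/-- Shift-invariance of a measure. -/
def Invariant1 (μ : Measure (Cfg1 A)) : Prop := Measure.map shift1 μ = μ

/-- The cylinder set `[w]` of a word `w` of length `n`. -/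
def cyl1 (n : ℕ) (w : Fin n → A) : Set (Cfg1 A) := { x | ∀ i : Fin n, x i = w i }

/-- Measure-theoretic entropy `h(μ) = inf_{n ≥ 1} (1/n) Σ_w (-μ[w] log μ[w])`. -/
noncomputable def entropy1 (μ : Measure (Cfg1 A)) : ℝ :=
  ⨅ n : {n : ℕ // 1 ≤ n},
    (n.1 : ℝ)⁻¹ * ∑ w : Fin n.1 → A, Real.negMulLog (μ (cyl1 n.1 w)).toReal

/-- Pressure `p_φ(β) = sup { h(μ) + β ∫ φ dμ }` over shift-invariant probability measures. -/
noncomputable def pressure1 (φ : Cfg1 A → ℝ) (β : ℝ) : ℝ :=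
  sSup { r | ∃ μ : Measure (Cfg1 A), IsProbabilityMeasure μ ∧ Invariant1 μ ∧
    r = entropy1 μ + β * ∫ x, φ x ∂μ }

/-- The set of equilibrium states of `βφ`. -/
def ES1 (φ : Cfg1 A → ℝ) (β : ℝ) : Set (Measure (Cfg1 A)) :=
  { μ | IsProbabilityMeasure μ ∧ Invariant1 μ ∧
      entropy1 μ + β * ∫ x, φ x ∂μ = pressure1 φ β }

/-- `φ` has a freezing phase transition at `βc`. -/
def FreezingPT1 (φ : Cfg1 A → ℝ) (βc : ℝ) : Prop :=
  (∀ β β' : ℝ, βc < β → βc < β' → ES1 φ β = ES1 φ β') ∧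
  (∀ β β' : ℝ, β < βc → βc < β' → ES1 φ β ≠ ES1 φ β')

/-- The zero-temperature accumulation points of `φ`. -/
def ZTA1 (φ : Cfg1 A → ℝ) : Set (Measure (Cfg1 A)) :=
  { μ | IsProbabilityMeasure μ ∧ Invariant1 μ ∧
      ∃ (β : ℕ → ℝ) (μs : ℕ → Measure (Cfg1 A)),
        Tendsto β atTop atTop ∧ (∀ k, μs k ∈ ES1 φ (β k)) ∧
        ∀ f : Cfg1 A → ℝ, Continuous f →
          Tendsto (fun k => ∫ x, f x ∂(μs k)) atTop (𝓝 (∫ x, f x ∂μ)) }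

/-- A one-sided subshift: nonempty, closed, shift-invariant. -/
def IsSubshift1 (X₀ : Set (Cfg1 A)) : Prop :=
  X₀.Nonempty ∧ IsClosed X₀ ∧ ∀ x ∈ X₀, shift1 x ∈ X₀

/-- The language `L_n(X₀)`: words of length `n` appearing at the origin of points of `X₀`. -/
def lang1 (X₀ : Set (Cfg1 A)) (n : ℕ) : Set (Fin n → A) :=
  { w | ∃ x ∈ X₀, ∀ i : Fin n, x i = w i }

/-- Topological entropy `h_top(X₀) = inf_{n ≥ 1} (1/n) log |L_n(X₀)|`. -/
noncomputable def topEnt1 (X₀ : Set (Cfg1 A)) : ℝ :=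
  ⨅ n : {n : ℕ // 1 ≤ n}, (n.1 : ℝ)⁻¹ * Real.log ((lang1 X₀ n.1).ncard)

/-- A measure of maximal entropy on the subshift `X₀`. -/
def IsMME1 (X₀ : Set (Cfg1 A)) (μ : Measure (Cfg1 A)) : Prop :=
  IsProbabilityMeasure μ ∧ Invariant1 μ ∧ μ X₀ = 1 ∧ entropy1 μ = topEnt1 X₀

/-- The metric `dist(x,y) = 2^{-min{i : x_i ≠ y_i}}`. -/
noncomputable def dist1 (x y : Cfg1 A) : ℝ :=
  if x = y then 0 else (2 : ℝ) ^ (-((sInf { i : ℕ | x i ≠ y i } : ℕ) : ℤ))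

/-- Distance from a point to a subshift. -/
noncomputable def distToSub1 (X₀ : Set (Cfg1 A)) (x : Cfg1 A) : ℝ :=
  sInf { r | ∃ y ∈ X₀, r = dist1 x y }

/-- The (topological) support of a measure: points all of whose open neighbourhoods have
positive measure. -/
def supp1 (μ : Measure (Cfg1 A)) : Set (Cfg1 A) :=
  { x | ∀ U : Set (Cfg1 A), IsOpen U → x ∈ U → 0 < μ U }

end Defs

/-!
Cut a word at position `2 ^ m - 1`, where `m` is the first index whose dyadic block
`[2 ^ m - 1, 2 ^ (m + 1) - 1)` is not a word of `X₀`. At each of the `2 ^ m - 1` positions before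
the cut the shifted point is at distance at least `2 ^ (-3 (2 ^ m - 1))` from `X₀`, and so pays at
least `a (3 (2 ^ m - 1))`. The piece before the cut is a concatenation of words of `X₀` of lengths
`1, 2, …, 2 ^ (m - 1)`, of which there are at most `exp ((2 ^ m - 1) h_top(X₀) + ∑ 2 ^ i κ_i)`.
The growth condition says that for large `β` the penalty beats `∑ 2 ^ i κ_i` with a margin summable
in `m`, so that the partition functions of `β φ` satisfy a renewal inequality and grow at
exponential rate at most `h_top(X₀)`. By the variational inequality the pressure is then frozen at
`h_top(X₀)`, and at any larger `β` an equilibrium state has `∫ φ = 0`, that is, lives on `X₀` and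
maximizes entropy there. Upper semicontinuity of the entropy passes this on to the zero-temperature
limits.
-/

section ShannonEntropy

variable {ι κ : Type*} [Fintype ι] [Fintype κ]

/-- The Shannon entropy, in nats, of a vector of weights on a finite set. -/
noncomputable def shannonEntropy (p : ι → ℝ) : ℝ := ∑ i, Real.negMulLog (p i)

lemma negMulLog_add_mul_log_le {p q Z : ℝ} (hp : 0 ≤ p) (hq : 0 ≤ q) (hpq : q = 0 → p = 0)
    (hZ : 0 < Z) : Real.negMulLog p + p * Real.log q ≤ p * Real.log Z + (q / Z - p) := by
  rcases hp.eq_or_lt with rfl | hp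
  · simpa using div_nonneg hq hZ.le
  have hq : 0 < q := hq.lt_of_ne fun h => hp.ne' (hpq h.symm)
  have hlog := Real.log_le_sub_one_of_pos (x := q / (Z * p)) (by positivity)
  rw [Real.log_div hq.ne' (by positivity), Real.log_mul hZ.ne' hp.ne'] at hlog
  calc Real.negMulLog p + p * Real.log q
      = p * Real.log Z + p * (Real.log q - (Real.log Z + Real.log p)) := by
        rw [Real.negMulLog]; ring
    _ ≤ p * Real.log Z + p * (q / (Z * p) - 1) := by gcongr
    _ = p * Real.log Z + (q / Z - p) := by field_simp

theorem shannonEntropy_add_sum_mul_log_le {p q : ι → ℝ} (hp : p ∈ stdSimplex ℝ ι)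
    (hq : ∀ i, 0 ≤ q i) (hpq : ∀ i, q i = 0 → p i = 0) :
    shannonEntropy p + ∑ i, p i * Real.log (q i) ≤ Real.log (∑ i, q i) := by
  set Z := ∑ i, q i with hZ
  have hZpos : 0 < Z := (Finset.sum_nonneg fun i _ => hq i).lt_of_ne fun h => by
    have hq0 := (Finset.sum_eq_zero_iff_of_nonneg fun i _ => hq i).1 h.symm
    have hp0 : ∑ i, p i = 0 := Finset.sum_eq_zero fun i hi => hpq i (hq0 i hi)
    exact zero_ne_one (hp0.symm.trans hp.2)
  calc shannonEntropy p + ∑ i, p i * Real.log (q i)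
      = ∑ i, (Real.negMulLog (p i) + p i * Real.log (q i)) := Finset.sum_add_distrib.symm
    _ ≤ ∑ i, (p i * Real.log Z + (q i / Z - p i)) := Finset.sum_le_sum fun i _ =>
        negMulLog_add_mul_log_le (hp.1 i) (hq i) (hpq i) hZpos
    _ = Real.log Z := by
        rw [Finset.sum_add_distrib, Finset.sum_sub_distrib, ← Finset.sum_mul, ← Finset.sum_div,
          hp.2, ← hZ, div_self hZpos.ne']
        ring

lemma shannonEntropy_nonneg {p : ι → ℝ} (hp : p ∈ stdSimplex ℝ ι) : 0 ≤ shannonEntropy p :=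
  Finset.sum_nonneg fun i _ => Real.negMulLog_nonneg (hp.1 i) (mem_Icc_of_mem_stdSimplex hp i).2

lemma sum_indicator_one_eq_ncard (s : Set ι) : ∑ i, s.indicator (1 : ι → ℝ) i = s.ncard := by
  simp [Set.indicator_apply, Finset.sum_boole, Set.ncard_eq_toFinset_card']

lemma shannonEntropy_le_log_ncard {p : ι → ℝ} (hp : p ∈ stdSimplex ℝ ι) {s : Set ι}
    (hs : ∀ i ∉ s, p i = 0) : shannonEntropy p ≤ Real.log s.ncard := by
  have hgibbs := shannonEntropy_add_sum_mul_log_le (q := s.indicator 1) hp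
    (Set.indicator_nonneg fun _ _ => zero_le_one) fun i hi => hs i fun his => by
      simp [his] at hi
  have hlog : ∀ i, p i * Real.log (s.indicator 1 i) = 0 := fun i => by
    by_cases hi : i ∈ s <;> simp [hi]
  simpa only [hlog, Finset.sum_const_zero, add_zero, sum_indicator_one_eq_ncard] using hgibbs

lemma log_ncard_le_shannonEntropy {p : ι → ℝ} (hp : p ∈ stdSimplex ℝ ι) {s : Set ι}
    (hs : ∀ i ∈ s, p i = (s.ncard : ℝ)⁻¹) : Real.log s.ncard ≤ shannonEntropy p := by
  rcases s.eq_empty_or_nonempty with rfl | hne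
  · simpa using shannonEntropy_nonneg hp
  have hcard : (0 : ℝ) < s.ncard := mod_cast (Set.ncard_pos s.toFinite).2 hne
  calc Real.log s.ncard
      = ∑ i ∈ s.toFinset, Real.negMulLog (p i) := by
        rw [Finset.sum_congr rfl fun i hi => by rw [hs i (Set.mem_toFinset.1 hi)],
          Finset.sum_const, ← Set.ncard_eq_toFinset_card', nsmul_eq_mul, Real.negMulLog,
          Real.log_inv]
        field_simp
    _ ≤ shannonEntropy p := Finset.sum_le_univ_sum_of_nonneg fun i =>
        Real.negMulLog_nonneg (hp.1 i) (mem_Icc_of_mem_stdSimplex hp i).2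

theorem shannonEntropy_prod_le {p : ι × κ → ℝ} (hp : p ∈ stdSimplex ℝ (ι × κ)) :
    shannonEntropy p ≤
      shannonEntropy (fun i => ∑ j, p (i, j)) + shannonEntropy (fun j => ∑ i, p (i, j)) := by
  set p₁ : ι → ℝ := fun i => ∑ j, p (i, j)
  set p₂ : κ → ℝ := fun j => ∑ i, p (i, j)
  have hle₁ : ∀ z, p z ≤ p₁ z.1 := fun z =>
    Finset.single_le_sum (f := fun j => p (z.1, j)) (fun j _ => hp.1 _) (Finset.mem_univ z.2)
  have hle₂ : ∀ z, p z ≤ p₂ z.2 := fun z =>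
    Finset.single_le_sum (f := fun i => p (i, z.2)) (fun i _ => hp.1 _) (Finset.mem_univ z.1)
  have hsum₁ : ∑ i, p₁ i = 1 := by rw [← Fintype.sum_prod_type, hp.2]
  have hsum₂ : ∑ j, p₂ j = 1 := by rw [← Fintype.sum_prod_type_right, hp.2]
  have hgibbs := shannonEntropy_add_sum_mul_log_le (q := fun z => p₁ z.1 * p₂ z.2) hp
    (fun z => mul_nonneg ((hp.1 z).trans (hle₁ z)) ((hp.1 z).trans (hle₂ z)))
    fun z hz => (hp.1 z).antisymm' <| by
      rcases mul_eq_zero.1 hz with h | h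
      exacts [h ▸ hle₁ z, h ▸ hle₂ z]
  have hlog : ∀ z, p z * Real.log (p₁ z.1 * p₂ z.2)
      = p z * Real.log (p₁ z.1) + p z * Real.log (p₂ z.2) := fun z => by
    rcases (hp.1 z).eq_or_lt with h | h
    · simp [← h]
    · rw [Real.log_mul (h.trans_le (hle₁ z)).ne' (h.trans_le (hle₂ z)).ne', mul_add]
  have hcross₁ : ∑ z : ι × κ, p z * Real.log (p₁ z.1) = -shannonEntropy p₁ := by
    simp only [Fintype.sum_prod_type, ← Finset.sum_mul, shannonEntropy, Real.negMulLog, neg_mul,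
      Finset.sum_neg_distrib, neg_neg, p₁]
  have hcross₂ : ∑ z : ι × κ, p z * Real.log (p₂ z.2) = -shannonEntropy p₂ := by
    simp only [Fintype.sum_prod_type_right, ← Finset.sum_mul, shannonEntropy, Real.negMulLog,
      neg_mul, Finset.sum_neg_distrib, neg_neg, p₂]
  have hmass : ∑ z : ι × κ, p₁ z.1 * p₂ z.2 = 1 := by
    rw [Fintype.sum_prod_type, ← Fintype.sum_mul_sum, hsum₁, hsum₂, one_mul]
  simp only [hlog, Finset.sum_add_distrib, hcross₁, hcross₂, hmass, Real.log_one] at hgibbs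
  linarith

lemma concaveOn_shannonEntropy :
    ConcaveOn ℝ {p : ι → ℝ | ∀ i, 0 ≤ p i} (shannonEntropy (ι := ι)) := by
  refine ⟨fun p hp q hq a b ha hb _ i => ?_, fun p hp q hq a b ha hb hab => ?_⟩
  · exact add_nonneg (mul_nonneg ha (hp i)) (mul_nonneg hb (hq i))
  · simp only [shannonEntropy, Finset.smul_sum, ← Finset.sum_add_distrib]
    exact Finset.sum_le_sum fun i _ => Real.concaveOn_negMulLog.2 (hp i) (hq i) ha hb hab

end ShannonEntropy

section Blocks

variable {A : Type} {X₀ : Set (Cfg1 A)} {x y : Cfg1 A} {i j k n : ℕ}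

/-- The block of length `k` occurring in `x` at position `i`. -/
def block (i k : ℕ) (x : Cfg1 A) : Fin k → A := fun t => x (i + t)

lemma cyl1_eq_preimage_block (n : ℕ) (w : Fin n → A) : cyl1 n w = block 0 n ⁻¹' {w} := by
  ext x
  simp [cyl1, block, funext_iff]

lemma mem_lang1_iff {w : Fin n → A} : w ∈ lang1 X₀ n ↔ ∃ x ∈ X₀, block 0 n x = w := by
  simp [lang1, block, funext_iff]

lemma shift1_iterate_apply (n : ℕ) (x : Cfg1 A) (i : ℕ) : shift1^[n] x i = x (n + i) := by
  induction n generalizing x with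
  | zero => simp
  | succ n ih => rw [Function.iterate_succ_apply, ih, shift1, Nat.add_right_comm]

lemma block_shift1_iterate (i k n : ℕ) (x : Cfg1 A) :
    block i k (shift1^[n] x) = block (n + i) k x := by
  ext t
  simp only [block, shift1_iterate_apply, add_assoc]

lemma block_eq_append_iff {u : Fin j → A} {v : Fin k → A} :
    block i (j + k) x = Fin.append u v ↔ block i j x = u ∧ block (i + j) k x = v := by
  simp [funext_iff, block, Fin.forall_fin_add, add_assoc]

lemma preimage_block_append (i j k : ℕ) (u : Fin j → A) (v : Fin k → A) :
    block i (j + k) ⁻¹' {Fin.append u v} = block i j ⁻¹' {u} ∩ block (i + j) k ⁻¹' {v} :=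
  Set.ext fun _ => block_eq_append_iff

lemma exists_block_eq [Nonempty A] (w : Fin n → A) : ∃ x, block 0 n x = w :=
  ⟨fun i => if h : i < n then w ⟨i, h⟩ else Classical.arbitrary A, by ext t; simp [block]⟩

/-- The block of length `k` at position `i` of `x` belongs to the language of `X₀`. -/
def Admissible (X₀ : Set (Cfg1 A)) (x : Cfg1 A) (i k : ℕ) : Prop := block i k x ∈ lang1 X₀ k

lemma admissible_iff : Admissible X₀ x i k ↔ ∃ y ∈ X₀, ∀ t < k, y t = x (i + t) := by
  simp [Admissible, mem_lang1_iff, block, funext_iff, Fin.forall_iff]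

lemma admissible_of_mem (hx : x ∈ X₀) (k : ℕ) : Admissible X₀ x 0 k :=
  mem_lang1_iff.2 ⟨x, hx, rfl⟩

lemma admissible_shift1_iterate :
    Admissible X₀ (shift1^[n] x) i k ↔ Admissible X₀ x (n + i) k := by
  rw [Admissible, Admissible, block_shift1_iterate]

lemma admissible_congr (hxy : block 0 n x = block 0 n y) (hn : ∀ t < k, i + t < n) :
    Admissible X₀ x i k ↔ Admissible X₀ y i k := by
  have hblock : block i k x = block i k y := funext fun t => by
    simpa [block] using congrFun hxy ⟨i + t, hn t t.2⟩
  rw [Admissible, Admissible, hblock]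

section Subshift

variable [TopologicalSpace A]

lemma IsSubshift1.iterate_mem (hX : IsSubshift1 X₀) (hx : x ∈ X₀) (n : ℕ) :
    shift1^[n] x ∈ X₀ :=
  Set.MapsTo.iterate (f := shift1) hX.2.2 n hx

lemma IsSubshift1.nonempty_alphabet (hX : IsSubshift1 X₀) : Nonempty A :=
  ⟨hX.1.some 0⟩

lemma Admissible.mono (hX : IsSubshift1 X₀) (h : Admissible X₀ x i k) (hij : i ≤ j)
    (hjn : j + n ≤ i + k) : Admissible X₀ x j n := by
  obtain ⟨y, hy, hyx⟩ := admissible_iff.1 h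
  refine admissible_iff.2 ⟨shift1^[j - i] y, hX.iterate_mem hy _, fun t ht => ?_⟩
  rw [shift1_iterate_apply, hyx _ (by lia)]
  congr 1
  lia

lemma admissible_zero_right (hX : IsSubshift1 X₀) (x : Cfg1 A) (i : ℕ) : Admissible X₀ x i 0 :=
  let ⟨y, hy⟩ := hX.1
  admissible_iff.2 ⟨y, hy, fun _ ht => absurd ht (Nat.not_lt_zero _)⟩

lemma exists_not_admissible (hX : IsSubshift1 X₀) (hx : x ∉ X₀) : ∃ k, ¬ Admissible X₀ x 0 k := by
  by_contra! hall
  choose y hy hyx using fun k => admissible_iff.1 (hall k)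
  refine hx (hX.2.1.mem_of_tendsto (b := atTop) ?_ (Eventually.of_forall hy))
  refine tendsto_pi_nhds.2 fun t => tendsto_const_nhds.congr' ?_
  filter_upwards [eventually_gt_atTop t] with k hk
  rw [hyx k t hk, zero_add]

end Subshift

end Blocks

section LanguageGrowth

variable {A : Type} {X₀ : Set (Cfg1 A)}

lemma topEnt1_nonneg (X₀ : Set (Cfg1 A)) : 0 ≤ topEnt1 X₀ :=
  Real.iInf_nonneg fun _ => mul_nonneg (by positivity) (Real.log_natCast_nonneg _)

lemma nat_mul_topEnt1_le (X₀ : Set (Cfg1 A)) (n : ℕ) :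
    n * topEnt1 X₀ ≤ Real.log (lang1 X₀ n).ncard := by
  rcases n.eq_zero_or_pos with rfl | hn
  · simpa using Real.log_natCast_nonneg _
  have hbdd : BddBelow (Set.range fun n : {n : ℕ // 1 ≤ n} =>
      (n.1 : ℝ)⁻¹ * Real.log (lang1 X₀ n.1).ncard) :=
    ⟨0, Set.forall_mem_range.2 fun _ =>
      mul_nonneg (by positivity) (Real.log_natCast_nonneg _)⟩
  have hle : topEnt1 X₀ ≤ (n : ℝ)⁻¹ * Real.log (lang1 X₀ n).ncard := ciInf_le hbdd ⟨n, hn⟩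
  rwa [inv_mul_eq_div, le_div_iff₀' (by positivity)] at hle

lemma lang1_univ [Nonempty A] (n : ℕ) : lang1 (Set.univ : Set (Cfg1 A)) n = Set.univ :=
  Set.eq_univ_of_forall fun w => mem_lang1_iff.2 <| by simpa using exists_block_eq w

lemma topEnt1_univ [Nonempty A] : topEnt1 (Set.univ : Set (Cfg1 A)) = Real.log (Nat.card A) := by
  have : Nonempty {n : ℕ // 1 ≤ n} := ⟨⟨1, le_rfl⟩⟩
  have hterm (n : {n : ℕ // 1 ≤ n}) :
      (n.1 : ℝ)⁻¹ * Real.log (lang1 (Set.univ : Set (Cfg1 A)) n.1).ncard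
        = Real.log (Nat.card A) := by
    have hn := n.2
    rw [lang1_univ, Set.ncard_univ, Nat.card_fun, Nat.card_fin]
    push_cast
    rw [Real.log_pow, inv_mul_cancel_left₀ (by positivity)]
  simp only [topEnt1, hterm, ciInf_const]

variable [TopologicalSpace A]

lemma lang1_nonempty (hX : IsSubshift1 X₀) (n : ℕ) : (lang1 X₀ n).Nonempty :=
  let ⟨x, hx⟩ := hX.1
  ⟨block 0 n x, admissible_of_mem hx n⟩

variable [Finite A]

lemma ncard_lang1_pos (hX : IsSubshift1 X₀) (n : ℕ) : (0 : ℝ) < (lang1 X₀ n).ncard :=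
  mod_cast (Set.ncard_pos (Set.toFinite _)).2 (lang1_nonempty hX n)

lemma ncard_lang1_add_le (hX : IsSubshift1 X₀) (m n : ℕ) :
    (lang1 X₀ (m + n)).ncard ≤ (lang1 X₀ m).ncard * (lang1 X₀ n).ncard := by
  rw [← Set.ncard_prod]
  refine Set.ncard_le_ncard_of_injOn (Fin.appendEquiv m n).symm ?_ (Equiv.injective _).injOn
    (Set.toFinite _)
  intro w hw
  obtain ⟨⟨u, v⟩, rfl⟩ := (Fin.appendEquiv m n).surjective w
  obtain ⟨x, hx, hxw⟩ := mem_lang1_iff.1 hw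
  obtain ⟨rfl, rfl⟩ := block_eq_append_iff.1 hxw
  rw [Equiv.symm_apply_apply]
  exact ⟨admissible_of_mem hx m, (admissible_of_mem hx (m + n)).mono hX (Nat.zero_le _) (by lia)⟩

lemma subadditive_log_ncard_lang1 (hX : IsSubshift1 X₀) :
    Subadditive fun n => Real.log (lang1 X₀ n).ncard := fun m n => by
  rw [← Real.log_mul (ncard_lang1_pos hX m).ne' (ncard_lang1_pos hX n).ne']
  exact Real.log_le_log (ncard_lang1_pos hX _) (mod_cast ncard_lang1_add_le hX m n)

lemma eventually_log_ncard_lang1_le (hX : IsSubshift1 X₀) {θ : ℝ} (hθ : topEnt1 X₀ < θ) :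
    ∀ᶠ n in atTop, Real.log (lang1 X₀ n).ncard ≤ n * θ := by
  have : Nonempty {n : ℕ // 1 ≤ n} := ⟨⟨1, le_rfl⟩⟩
  obtain ⟨⟨q, hq⟩, hqθ⟩ := exists_lt_of_ciInf_lt hθ
  rw [inv_mul_eq_div] at hqθ
  filter_upwards [(subadditive_log_ncard_lang1 hX).eventually_div_lt_of_div_lt (by lia) hqθ,
    eventually_gt_atTop 0] with n hn hn0
  exact ((div_lt_iff₀' (mod_cast hn0)).1 hn).le

lemma exists_log_ncard_lang1_le (hX : IsSubshift1 X₀) {θ : ℝ} (hθ : topEnt1 X₀ < θ) :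
    ∃ C, ∀ n : ℕ, Real.log (lang1 X₀ n).ncard ≤ C + n * θ := by
  obtain ⟨N, hN⟩ := eventually_atTop.1 (eventually_log_ncard_lang1_le hX hθ)
  have hlog (n : ℕ) : 0 ≤ Real.log (lang1 X₀ n).ncard := Real.log_natCast_nonneg _
  have hθ0 : 0 < θ := (topEnt1_nonneg X₀).trans_lt hθ
  refine ⟨∑ n ∈ Finset.range N, Real.log (lang1 X₀ n).ncard, fun n => ?_⟩
  rcases lt_or_ge n N with hn | hn
  · have := Finset.single_le_sum (fun i _ => hlog i) (Finset.mem_range.2 hn)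
    have : 0 ≤ n * θ := by positivity
    linarith
  · linarith [hN n hn, Finset.sum_nonneg fun i (_ : i ∈ Finset.range N) => hlog i]

lemma topEnt1_lt_topEnt1_univ (hX : IsSubshift1 X₀) (hproper : X₀ ≠ Set.univ) :
    topEnt1 X₀ < topEnt1 (Set.univ : Set (Cfg1 A)) := by
  have := hX.nonempty_alphabet
  obtain ⟨x, hx⟩ := (Set.ne_univ_iff_exists_notMem X₀).1 hproper
  obtain ⟨k, hk⟩ := exists_not_admissible hX hx
  have hne : lang1 X₀ k ≠ Set.univ := fun h => hk (Set.eq_univ_iff_forall.1 h _)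
  have hlt : (lang1 X₀ k).ncard < Nat.card A ^ k := by
    simpa [Set.ncard_univ, Nat.card_fun] using
      Set.ncard_lt_ncard (Set.ssubset_univ_iff.2 hne) (Set.toFinite _)
  have hlog : k * topEnt1 X₀ < k * Real.log (Nat.card A) := by
    rw [← Real.log_pow]
    exact (nat_mul_topEnt1_le X₀ k).trans_lt
      (Real.log_lt_log (ncard_lang1_pos hX k) (mod_cast hlt))
  exact topEnt1_univ (A := A) ▸ lt_of_mul_lt_mul_left hlog k.cast_nonneg

end LanguageGrowth

section EntropyExcess

variable {A : Type} {X₀ : Set (Cfg1 A)}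

/-- The accumulated excess `∑_{i < m} 2 ^ i κ_i` of the growth of the language of `X₀` at the
dyadic lengths over its topological entropy. -/
noncomputable def entropyExcess (X₀ : Set (Cfg1 A)) (m : ℕ) : ℝ :=
  ∑ i ∈ Finset.range m,
    (2 : ℝ) ^ i * (((2 : ℝ) ^ i)⁻¹ * Real.log (lang1 X₀ (2 ^ i)).ncard - topEnt1 X₀)

lemma entropyExcess_nonneg (X₀ : Set (Cfg1 A)) (m : ℕ) : 0 ≤ entropyExcess X₀ m := by
  refine Finset.sum_nonneg fun i _ => mul_nonneg (by positivity) (sub_nonneg.2 ?_)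
  rw [inv_mul_eq_div, le_div_iff₀' (by positivity)]
  exact mod_cast nat_mul_topEnt1_le X₀ (2 ^ i)

lemma cast_two_pow_sub_one (m : ℕ) : ((2 ^ m - 1 : ℕ) : ℝ) = 2 ^ m - 1 := by
  rw [Nat.cast_pred (by positivity), Nat.cast_pow, Nat.cast_ofNat]

lemma sum_range_two_pow (m : ℕ) : ∑ i ∈ Finset.range m, (2 : ℝ) ^ i = (2 ^ m - 1 : ℕ) := by
  rw [geom_sum_eq (by norm_num), cast_two_pow_sub_one]
  norm_num

lemma sum_log_ncard_lang1_two_pow (X₀ : Set (Cfg1 A)) (m : ℕ) :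
    ∑ i ∈ Finset.range m, Real.log (lang1 X₀ (2 ^ i)).ncard
      = entropyExcess X₀ m + (2 ^ m - 1 : ℕ) * topEnt1 X₀ := by
  rw [entropyExcess, ← sum_range_two_pow, Finset.sum_mul, ← Finset.sum_add_distrib]
  refine Finset.sum_congr rfl fun i _ => ?_
  rw [mul_sub, mul_inv_cancel_left₀ (by positivity), sub_add_cancel]

lemma exists_sum_log_ncard_lang1_two_pow_le [TopologicalSpace A] [Finite A]
    (hX : IsSubshift1 X₀) {θ : ℝ} (hθ : topEnt1 X₀ < θ) :
    ∃ C, ∀ m, ∑ i ∈ Finset.range m, Real.log (lang1 X₀ (2 ^ i)).ncard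
      ≤ C + (2 ^ m - 1 : ℕ) * θ := by
  obtain ⟨N, hN⟩ := eventually_atTop.1 (eventually_log_ncard_lang1_le hX hθ)
  have hlog (n : ℕ) : 0 ≤ Real.log (lang1 X₀ n).ncard := Real.log_natCast_nonneg _
  have hθ0 : 0 ≤ θ := (topEnt1_nonneg X₀).trans hθ.le
  refine ⟨∑ i ∈ Finset.range N, Real.log (lang1 X₀ (2 ^ i)).ncard, fun m => ?_⟩
  rw [← sum_range_two_pow, Finset.sum_mul]
  induction m with
  | zero => simpa using Finset.sum_nonneg fun i _ => hlog (2 ^ i)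
  | succ m ih =>
    rcases lt_or_ge m N with hm | hm
    · have hsub := Finset.sum_le_sum_of_subset_of_nonneg
        (Finset.range_subset_range.2 (Nat.succ_le_of_lt hm)) fun i _ _ => hlog (2 ^ i)
      have : 0 ≤ ∑ i ∈ Finset.range (m + 1), (2 : ℝ) ^ i * θ := by positivity
      linarith
    · have hlast := hN (2 ^ m) (hm.trans Nat.lt_two_pow_self.le)
      push_cast at hlast
      rw [Finset.sum_range_succ, Finset.sum_range_succ]
      linarith

end EntropyExcess

section BlockEntropy

lemma sum_range_mul_eq {M : Type*} [AddCommMonoid M] (f : ℕ → M) (q N : ℕ) :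
    ∑ i ∈ Finset.range (q * N), f i
      = ∑ r ∈ Finset.range q, ∑ k ∈ Finset.range N, f (r + q * k) := by
  induction N with
  | zero => simp
  | succ N ih =>
    rw [Nat.mul_succ, Finset.sum_range_add, ih]
    simp only [Finset.sum_range_succ, Finset.sum_add_distrib, add_comm (q * N)]

variable {A : Type} [MeasurableSpace A]

@[fun_prop]
lemma measurable_block (i k : ℕ) : Measurable (block (A := A) i k) :=
  measurable_pi_lambda _ fun _ => measurable_pi_apply _

@[fun_prop]
lemma measurable_shift1 : Measurable (shift1 (A := A)) :=
  measurable_pi_lambda _ fun _ => measurable_pi_apply _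

lemma measurableSet_preimage_block [MeasurableSingletonClass A] (i k : ℕ) (u : Fin k → A) :
    MeasurableSet (block i k ⁻¹' {u}) :=
  measurable_block i k (measurableSet_singleton u)

/-- The probabilities, under `ν`, of the possible blocks of length `k` at position `i`. -/
noncomputable def blockLaw (ν : Measure (Cfg1 A)) (i k : ℕ) (u : Fin k → A) : ℝ :=
  ν.real (block i k ⁻¹' {u})

variable [Fintype A]

/-- The Shannon entropy, under `ν`, of the block of length `k` at position `i`. -/
noncomputable def blockEntropy (ν : Measure (Cfg1 A)) (i k : ℕ) : ℝ :=
  shannonEntropy (blockLaw ν i k)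

lemma entropy1_eq_iInf_blockEntropy (μ : Measure (Cfg1 A)) :
    entropy1 μ = ⨅ n : {n : ℕ // 1 ≤ n}, (n.1 : ℝ)⁻¹ * blockEntropy μ 0 n.1 := by
  simp only [entropy1, blockEntropy, shannonEntropy, blockLaw, cyl1_eq_preimage_block,
    measureReal_def]

lemma le_entropy1 {μ : Measure (Cfg1 A)} {c : ℝ}
    (h : ∀ n : ℕ, 1 ≤ n → n * c ≤ blockEntropy μ 0 n) : c ≤ entropy1 μ := by
  have : Nonempty {n : ℕ // 1 ≤ n} := ⟨⟨1, le_rfl⟩⟩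
  rw [entropy1_eq_iInf_blockEntropy]
  refine le_ciInf fun n => ?_
  rw [inv_mul_eq_div, le_div_iff₀' (mod_cast n.2)]
  exact h n.1 n.2

variable [MeasurableSingletonClass A]

lemma sum_blockLaw (ν : Measure (Cfg1 A)) [IsFiniteMeasure ν] (i k : ℕ) :
    ∑ u, blockLaw ν i k u = ν.real Set.univ := by
  simpa [blockLaw] using sum_measureReal_preimage_singleton (μ := ν) Finset.univ
    fun u _ => measurableSet_preimage_block i k u

lemma sum_blockLaw_append_right (ν : Measure (Cfg1 A)) [IsFiniteMeasure ν] (i j k : ℕ)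
    (u : Fin j → A) : ∑ v, blockLaw ν i (j + k) (Fin.append u v) = blockLaw ν i j u := by
  have h := sum_blockLaw (ν.restrict (block i j ⁻¹' {u})) (i + j) k
  simpa only [blockLaw, preimage_block_append, measureReal_restrict_apply_univ, Set.inter_comm,
    measureReal_restrict_apply (measurableSet_preimage_block _ _ _)] using h

lemma sum_blockLaw_append_left (ν : Measure (Cfg1 A)) [IsFiniteMeasure ν] (i j k : ℕ)
    (v : Fin k → A) : ∑ u, blockLaw ν i (j + k) (Fin.append u v) = blockLaw ν (i + j) k v := by
  have h := sum_blockLaw (ν.restrict (block (i + j) k ⁻¹' {v})) i j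
  simpa only [blockLaw, preimage_block_append, measureReal_restrict_apply_univ,
    measureReal_restrict_apply (measurableSet_preimage_block _ _ _)] using h

lemma blockLaw_mem_stdSimplex (ν : Measure (Cfg1 A)) [IsProbabilityMeasure ν] (i k : ℕ) :
    blockLaw ν i k ∈ stdSimplex ℝ (Fin k → A) :=
  ⟨fun _ => measureReal_nonneg, by rw [sum_blockLaw, probReal_univ]⟩

section Probability

variable (ν : Measure (Cfg1 A)) [IsProbabilityMeasure ν]

lemma blockEntropy_nonneg (i k : ℕ) : 0 ≤ blockEntropy ν i k :=
  shannonEntropy_nonneg (blockLaw_mem_stdSimplex ν i k)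

lemma blockEntropy_add_le (i j k : ℕ) :
    blockEntropy ν i (j + k) ≤ blockEntropy ν i j + blockEntropy ν (i + j) k := by
  have hp : (fun z : (Fin j → A) × (Fin k → A) => blockLaw ν i (j + k) (Fin.append z.1 z.2))
      ∈ stdSimplex ℝ _ :=
    ⟨fun _ => measureReal_nonneg, ((Fin.appendEquiv j k).sum_comp (blockLaw ν i (j + k))).trans
      (blockLaw_mem_stdSimplex ν i (j + k)).2⟩
  have hsub := shannonEntropy_prod_le hp
  simp only [sum_blockLaw_append_right, sum_blockLaw_append_left] at hsub
  have hjoint : blockEntropy ν i (j + k) = shannonEntropy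
      (fun z : (Fin j → A) × (Fin k → A) => blockLaw ν i (j + k) (Fin.append z.1 z.2)) :=
    ((Fin.appendEquiv j k).sum_comp fun w => Real.negMulLog (blockLaw ν i (j + k) w)).symm
  exact hjoint ▸ hsub

lemma blockEntropy_le (i k : ℕ) : blockEntropy ν i k ≤ k * Real.log (Nat.card A) := by
  have h := shannonEntropy_le_log_ncard (blockLaw_mem_stdSimplex ν i k) (s := Set.univ)
    fun u hu => absurd (Set.mem_univ u) hu
  rwa [Set.ncard_univ, Nat.card_fun, Nat.card_fin, Nat.cast_pow, Real.log_pow] at h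

lemma nat_mul_entropy1_le (n : ℕ) : n * entropy1 ν ≤ blockEntropy ν 0 n := by
  rcases n.eq_zero_or_pos with rfl | hn
  · simpa using blockEntropy_nonneg ν 0 0
  have hbdd : BddBelow (Set.range fun n : {n : ℕ // 1 ≤ n} =>
      (n.1 : ℝ)⁻¹ * blockEntropy ν 0 n.1) :=
    ⟨0, Set.forall_mem_range.2 fun n => mul_nonneg (by positivity) (blockEntropy_nonneg ν 0 n.1)⟩
  have hle : entropy1 ν ≤ (n : ℝ)⁻¹ * blockEntropy ν 0 n :=
    (entropy1_eq_iInf_blockEntropy ν).trans_le (ciInf_le hbdd ⟨n, hn⟩)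
  rwa [inv_mul_eq_div, le_div_iff₀' (by positivity)] at hle

lemma blockEntropy_le_sum_add (q M : ℕ) {r : ℕ} (hr : r ≤ q) :
    blockEntropy ν 0 (q * (M + 1)) ≤
      ∑ k ∈ Finset.range (M + 1), blockEntropy ν (r + q * k) q + q * Real.log (Nat.card A) := by
  have hmiddle (M : ℕ) :
      blockEntropy ν r (q * M) ≤ ∑ k ∈ Finset.range M, blockEntropy ν (r + q * k) q := by
    induction M with
    | zero => simpa using blockEntropy_le ν r 0
    | succ M ih =>
      rw [Finset.sum_range_succ, Nat.mul_succ]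
      exact (blockEntropy_add_le ν r (q * M) q).trans (by gcongr)
  have hsplit : q * (M + 1) = r + (q * M + (q - r)) := by lia
  have hprefix := blockEntropy_add_le ν 0 r (q * M + (q - r))
  have hsuffix := blockEntropy_add_le ν r (q * M) (q - r)
  have hleft := blockEntropy_le ν 0 r
  have hright := blockEntropy_le ν (r + q * M) (q - r)
  rw [Nat.cast_sub hr] at hright
  rw [zero_add] at hprefix
  rw [hsplit, Finset.sum_range_succ]
  linarith [hmiddle M, blockEntropy_nonneg ν (r + q * M) q]

lemma mul_blockEntropy_le_sum (q N : ℕ) :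
    q * blockEntropy ν 0 (q * N) ≤
      ∑ i ∈ Finset.range (q * N), blockEntropy ν i q + q * (q * Real.log (Nat.card A)) := by
  rcases N with _ | M
  · have h := blockEntropy_le ν 0 0
    have hpos : 0 ≤ q * (q * Real.log (Nat.card A)) := by positivity
    rw [Nat.cast_zero, zero_mul] at h
    simpa using (mul_nonpos_of_nonneg_of_nonpos q.cast_nonneg h).trans hpos
  calc q * blockEntropy ν 0 (q * (M + 1))
      = ∑ r ∈ Finset.range q, blockEntropy ν 0 (q * (M + 1)) := by simp
    _ ≤ _ := Finset.sum_le_sum fun r hr =>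
        blockEntropy_le_sum_add ν q M (Finset.mem_range.1 hr).le
    _ = _ := by simp [Finset.sum_add_distrib, sum_range_mul_eq]

end Probability

lemma entropy1_le_topEnt1 {X₀ : Set (Cfg1 A)} (hX : MeasurableSet X₀) {μ : Measure (Cfg1 A)}
    [IsProbabilityMeasure μ] (hμ : μ X₀ = 1) : entropy1 μ ≤ topEnt1 X₀ := by
  have : Nonempty {n : ℕ // 1 ≤ n} := ⟨⟨1, le_rfl⟩⟩
  refine le_ciInf fun n => ?_
  rw [inv_mul_eq_div, le_div_iff₀' (mod_cast n.2)]
  refine (nat_mul_entropy1_le μ n.1).trans (shannonEntropy_le_log_ncard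
    (blockLaw_mem_stdSimplex μ 0 n.1) fun u hu => ?_)
  have hnull : μ X₀ᶜ = 0 := (prob_compl_eq_zero_iff hX).2 hμ
  have hsub : block 0 n.1 ⁻¹' {u} ⊆ X₀ᶜ := fun x hx hxX => hu (mem_lang1_iff.2 ⟨x, hxX, hx⟩)
  rw [blockLaw, measureReal_def, measure_mono_null hsub hnull, ENNReal.toReal_zero]

end BlockEntropy

section OrbitAverage

variable {A : Type} [MeasurableSpace A]

/-- The average of the first `n` images of `ν` under the shift; it is the zero measure when
`n = 0`. -/
noncomputable def orbitAverage (ν : Measure (Cfg1 A)) (n : ℕ) : Measure (Cfg1 A) :=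
  (n : ℝ≥0∞)⁻¹ • ∑ i ∈ Finset.range n, ν.map shift1^[i]

lemma orbitAverage_apply (ν : Measure (Cfg1 A)) (n : ℕ) {B : Set (Cfg1 A)}
    (hB : MeasurableSet B) :
    orbitAverage ν n B = (n : ℝ≥0∞)⁻¹ * ∑ i ∈ Finset.range n, ν (shift1^[i] ⁻¹' B) := by
  simp only [orbitAverage, Measure.smul_apply, Measure.finsetSum_apply, smul_eq_mul,
    Measure.map_apply (measurable_shift1.iterate _) hB]

variable (ν : Measure (Cfg1 A)) [IsProbabilityMeasure ν] {n : ℕ}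

lemma orbitAverage_eq_one (hn : n ≠ 0) {B : Set (Cfg1 A)} (hB : MeasurableSet B)
    (hshift : Set.MapsTo shift1 B B) (hν : ν B = 1) : orbitAverage ν n B = 1 := by
  have hone (i : ℕ) : ν (shift1^[i] ⁻¹' B) = 1 :=
    prob_le_one.antisymm (hν ▸ measure_mono (hshift.iterate i))
  simp [orbitAverage_apply ν n hB, hone,
    ENNReal.inv_mul_cancel (Nat.cast_ne_zero.2 hn) (ENNReal.natCast_ne_top n)]

lemma isProbabilityMeasure_orbitAverage (hn : n ≠ 0) :
    IsProbabilityMeasure (orbitAverage ν n) :=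
  ⟨orbitAverage_eq_one ν hn .univ (Set.mapsTo_univ _ _) measure_univ⟩

lemma integral_orbitAverage {f : Cfg1 A → ℝ} (hf : Measurable f) {C : ℝ}
    (hC : ∀ x, ‖f x‖ ≤ C) (n : ℕ) :
    ∫ x, f x ∂(orbitAverage ν n)
      = (n : ℝ)⁻¹ * ∑ i ∈ Finset.range n, ∫ x, f (shift1^[i] x) ∂ν := by
  have (i : ℕ) : IsProbabilityMeasure (ν.map shift1^[i]) :=
    Measure.isProbabilityMeasure_map (measurable_shift1.iterate i).aemeasurable
  rw [orbitAverage, integral_smul_measure, integral_finsetSum_measure fun i _ =>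
    Integrable.of_bound hf.aestronglyMeasurable C (ae_of_all _ hC)]
  simp only [integral_map (measurable_shift1.iterate _).aemeasurable hf.aestronglyMeasurable,
    ENNReal.toReal_inv, ENNReal.toReal_natCast, smul_eq_mul]

lemma norm_integral_shift1_sub_orbitAverage_le {f : Cfg1 A → ℝ} (hf : Measurable f) {C : ℝ}
    (hC : ∀ x, ‖f x‖ ≤ C) (n : ℕ) :
    ‖∫ x, f (shift1 x) ∂(orbitAverage ν n) - ∫ x, f x ∂(orbitAverage ν n)‖
      ≤ (n : ℝ)⁻¹ * (C + C) := by
  have hbound (i : ℕ) : ‖∫ x, f (shift1^[i] x) ∂ν‖ ≤ C := by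
    simpa using norm_integral_le_of_norm_le_const (μ := ν) (ae_of_all _ fun x => hC (shift1^[i] x))
  have hshift := integral_orbitAverage ν (hf.comp measurable_shift1) (fun x => hC (shift1 x)) n
  simp only [Function.comp_apply] at hshift
  rw [hshift, integral_orbitAverage ν hf hC, ← mul_sub, ← Finset.sum_sub_distrib]
  simp only [← Function.iterate_succ_apply' shift1]
  rw [Finset.sum_range_sub fun i => ∫ x, f (shift1^[i] x) ∂ν, norm_mul, norm_inv,
    RCLike.norm_natCast]
  gcongr
  exact (norm_sub_le _ _).trans (add_le_add (hbound n) (hbound 0))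

variable [MeasurableSingletonClass A]

lemma blockLaw_orbitAverage (n q : ℕ) : blockLaw (orbitAverage ν n) 0 q
    = ∑ i ∈ Finset.range n, (n : ℝ)⁻¹ • blockLaw ν i q := by
  have hpreimage (i : ℕ) (u : Fin q → A) :
      shift1^[i] ⁻¹' (block 0 q ⁻¹' {u}) = block i q ⁻¹' {u} := by
    ext x
    simp [block_shift1_iterate]
  ext u
  rw [blockLaw, measureReal_def, orbitAverage_apply ν n (measurableSet_preimage_block 0 q u),
    ENNReal.toReal_mul, ENNReal.toReal_sum fun i _ => measure_ne_top _ _]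
  simp [hpreimage, blockLaw, measureReal_def, Finset.mul_sum]

variable [Fintype A]

lemma sum_blockEntropy_le_blockEntropy_orbitAverage (hn : n ≠ 0) (q : ℕ) :
    (n : ℝ)⁻¹ * ∑ i ∈ Finset.range n, blockEntropy ν i q
      ≤ blockEntropy (orbitAverage ν n) 0 q := by
  rw [blockEntropy, blockLaw_orbitAverage, Finset.mul_sum]
  exact concaveOn_shannonEntropy.le_map_sum (fun _ _ => by positivity) (by simp [hn])
    fun i _ _ => measureReal_nonneg

lemma le_blockEntropy_orbitAverage (hn : n ≠ 0) {q : ℕ} (hq : q ∣ n) :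
    (n : ℝ)⁻¹ * (q * blockEntropy ν 0 n - q * (q * Real.log (Nat.card A)))
      ≤ blockEntropy (orbitAverage ν n) 0 q := by
  obtain ⟨N, rfl⟩ := hq
  refine le_trans ?_ (sum_blockEntropy_le_blockEntropy_orbitAverage ν hn q)
  gcongr
  exact sub_le_iff_le_add.2 (mul_blockEntropy_le_sum ν q N)

end OrbitAverage

section MaximalEntropy

variable {A : Type} [TopologicalSpace A] [DiscreteTopology A] [MeasurableSpace A]
  [BorelSpace A] {X₀ : Set (Cfg1 A)}

lemma invariant1_of_tendsto [Finite A] {ι : Type*} {F : Filter ι} [F.NeBot]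
    {μs : ι → ProbabilityMeasure (Cfg1 A)} {μ : ProbabilityMeasure (Cfg1 A)}
    (hμ : Tendsto μs F (𝓝 μ))
    (hasymp : ∀ f : BoundedContinuousFunction (Cfg1 A) ℝ,
      Tendsto (fun k => ∫ x, f (shift1 x) ∂(μs k) - ∫ x, f x ∂(μs k)) F (𝓝 0)) :
    Invariant1 (μ : Measure (Cfg1 A)) := by
  have := Measure.isProbabilityMeasure_map (μ := (μ : Measure (Cfg1 A)))
    measurable_shift1.aemeasurable
  have hshift : Continuous (shift1 (A := A)) := by unfold shift1; fun_prop
  refine ext_of_forall_integral_eq_of_IsFiniteMeasure fun f => ?_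
  rw [integral_map measurable_shift1.aemeasurable f.continuous.aestronglyMeasurable]
  have hint := ProbabilityMeasure.tendsto_iff_forall_integral_tendsto.1 hμ
  have hlim := (hint (f.compContinuous ⟨shift1, hshift⟩)).sub (hint f)
  exact sub_eq_zero.1 (tendsto_nhds_unique hlim (hasymp f))

variable [Fintype A]

lemma exists_log_ncard_lang1_le_blockEntropy (hX : IsSubshift1 X₀) (n : ℕ) :
    ∃ ν : Measure (Cfg1 A), IsProbabilityMeasure ν ∧ ν X₀ = 1 ∧
      Real.log (lang1 X₀ n).ncard ≤ blockEntropy ν 0 n := by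
  have := hX.nonempty_alphabet
  have hpoint (w : Fin n → A) : ∃ y, block 0 n y = w ∧ (w ∈ lang1 X₀ n → y ∈ X₀) := by
    by_cases hw : w ∈ lang1 X₀ n
    · obtain ⟨y, hy, hyw⟩ := mem_lang1_iff.1 hw
      exact ⟨y, hyw, fun _ => hy⟩
    · obtain ⟨y, hyw⟩ := exists_block_eq w
      exact ⟨y, hyw, fun h => absurd h hw⟩
  choose y hyw hyX using hpoint
  have hy : Measurable y := measurable_of_finite y
  have hfin : (lang1 X₀ n).Finite := Set.toFinite _
  have := ProbabilityTheory.isProbabilityMeasure_uniformOn hfin (lang1_nonempty hX n)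
  have hν := Measure.isProbabilityMeasure_map hy.aemeasurable
    (μ := ProbabilityTheory.uniformOn (lang1 X₀ n))
  refine ⟨_, hν, ?_, log_ncard_le_shannonEntropy (blockLaw_mem_stdSimplex _ 0 n)
    fun u hu => ?_⟩
  · rw [Measure.map_apply hy hX.2.1.measurableSet]
    exact ProbabilityTheory.uniformOn_eq_one_of hfin (lang1_nonempty hX n) hyX
  · have hpre : y ⁻¹' (block 0 n ⁻¹' {u}) = {u} := by
      ext w
      simp [hyw]
    rw [blockLaw, measureReal_def, Measure.map_apply hy (measurableSet_preimage_block 0 n u),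
      hpre, ProbabilityTheory.uniformOn, ProbabilityTheory.cond_apply hfin.measurableSet,
      Set.inter_eq_right.2 (Set.singleton_subset_iff.2 hu), Measure.count_singleton,
      Measure.count_apply_finite _ hfin, ← Set.ncard_eq_toFinset_card _ hfin]
    simp

lemma tendsto_blockEntropy {ι : Type*} {F : Filter ι} {μs : ι → ProbabilityMeasure (Cfg1 A)}
    {μ : ProbabilityMeasure (Cfg1 A)} (hμ : Tendsto μs F (𝓝 μ)) (q : ℕ) :
    Tendsto (fun k => blockEntropy (μs k : Measure (Cfg1 A)) 0 q) F
      (𝓝 (blockEntropy (μ : Measure (Cfg1 A)) 0 q)) := by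
  refine tendsto_finsetSum _ fun u _ => (Real.continuous_negMulLog.tendsto _).comp ?_
  have hclopen : IsClopen (block (A := A) 0 q ⁻¹' {u}) :=
    (isClopen_discrete {u}).preimage (by unfold block; fun_prop)
  exact (ENNReal.tendsto_toReal (measure_ne_top _ _)).comp
    (ProbabilityMeasure.tendsto_measure_of_null_frontier_of_tendsto' hμ
      (by simp [hclopen.frontier_eq]))

lemma isMME1_of_tendsto {ι : Type*} {F : Filter ι} [F.NeBot]
    {μs : ι → ProbabilityMeasure (Cfg1 A)} {μ : ProbabilityMeasure (Cfg1 A)} (hX : IsClosed X₀)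
    (hμ : Tendsto μs F (𝓝 μ)) (hinv : Invariant1 (μ : Measure (Cfg1 A)))
    (hsupp : ∀ᶠ k in F, (μs k : Measure (Cfg1 A)) X₀ = 1)
    (hent : ∀ q : ℕ, 1 ≤ q → ∀ c < q * topEnt1 X₀,
      ∀ᶠ k in F, c ≤ blockEntropy (μs k : Measure (Cfg1 A)) 0 q) :
    IsMME1 X₀ (μ : Measure (Cfg1 A)) := by
  have hone : (μ : Measure (Cfg1 A)) X₀ = 1 := by
    refine prob_le_one.antisymm ?_
    have hlimsup := ProbabilityMeasure.limsup_measure_closed_le_of_tendsto hμ hX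
    rwa [limsup_congr hsupp, limsup_const] at hlimsup
  refine ⟨inferInstance, hinv, hone,
    (entropy1_le_topEnt1 hX.measurableSet hone).antisymm (le_entropy1 fun q hq => ?_)⟩
  exact le_of_forall_lt_imp_le_of_dense fun c hc =>
    ge_of_tendsto (tendsto_blockEntropy hμ q) (hent q hq c hc)

theorem exists_isMME1 (hX : IsSubshift1 X₀) : ∃ μ, IsMME1 X₀ μ := by
  choose ν hνprob hνX hνent using fun N : ℕ =>
    exists_log_ncard_lang1_le_blockEntropy hX N.factorial
  let μs (N : ℕ) : ProbabilityMeasure (Cfg1 A) :=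
    ⟨orbitAverage (ν N) N.factorial, isProbabilityMeasure_orbitAverage _ N.factorial_ne_zero⟩
  obtain ⟨μ, -, hμ⟩ := isCompact_univ.ultrafilter_le_nhds ((hyperfilter ℕ).map μs) (by simp)
  have hF : (hyperfilter ℕ : Filter ℕ) ≤ atTop := Nat.hyperfilter_le_atTop
  have hdecay (C : ℝ) : Tendsto (fun N : ℕ => (N.factorial : ℝ)⁻¹ * C) (hyperfilter ℕ) (𝓝 0) := by
    have hfac : Tendsto (fun N : ℕ => (N.factorial : ℝ)) atTop atTop :=
      tendsto_natCast_atTop_atTop.comp (tendsto_atTop_mono Nat.self_le_factorial tendsto_id)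
    simpa using (hfac.inv_tendsto_atTop.mono_left hF).mul_const C
  refine ⟨μ, isMME1_of_tendsto hX.2.1 hμ (invariant1_of_tendsto hμ fun f => ?_)
    (.of_forall fun N => orbitAverage_eq_one _ N.factorial_ne_zero hX.2.1.measurableSet
      hX.2.2 (hνX N)) fun q hq c hc => ?_⟩
  · exact squeeze_zero_norm (fun N => norm_integral_shift1_sub_orbitAverage_le (ν N)
      f.continuous.measurable f.norm_coe_le_norm N.factorial) (hdecay _)
  · filter_upwards [hF (eventually_ge_atTop q),
      (hdecay (q * (q * Real.log (Nat.card A)))).eventually_lt_const (sub_pos.2 hc)]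
      with N hN hsmall
    have hle := le_blockEntropy_orbitAverage (ν N) N.factorial_ne_zero
      (Nat.dvd_factorial hq hN)
    have hent := (nat_mul_topEnt1_le X₀ N.factorial).trans (hνent N)
    have hmain : q * topEnt1 X₀ ≤
        (N.factorial : ℝ)⁻¹ * (q * blockEntropy (ν N) 0 N.factorial) := by
      rw [le_inv_mul_iff₀ (by positivity), mul_left_comm]
      gcongr
    rw [mul_sub] at hle
    change c ≤ blockEntropy (orbitAverage (ν N) N.factorial) 0 q
    linarith

end MaximalEntropy

section PartitionFunction

variable {A : Type} {ψ : Cfg1 A → ℝ}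

/-- The supremum over a cylinder `[w]` of the Birkhoff sums of `ψ` of the same length as `w`. -/
noncomputable def birkhoffSup (ψ : Cfg1 A → ℝ) (n : ℕ) (w : Fin n → A) : ℝ :=
  ⨆ x : {x // block 0 n x = w}, birkhoffSum shift1 ψ n x

lemma birkhoffSum_le_birkhoffSup (hψ : BddAbove (Set.range ψ)) (n : ℕ) (x : Cfg1 A) :
    birkhoffSum shift1 ψ n x ≤ birkhoffSup ψ n (block 0 n x) := by
  obtain ⟨C, hC⟩ := hψ
  refine le_ciSup (f := fun y : {y // block 0 n y = block 0 n x} => birkhoffSum shift1 ψ n y)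
    ⟨n * C, Set.forall_mem_range.2 fun y => ?_⟩ ⟨x, rfl⟩
  simpa [birkhoffSum] using
    Finset.sum_le_card_nsmul (Finset.range n) (fun i => ψ (shift1^[i] y.1)) C
      fun i _ => hC (Set.mem_range_self _)

lemma birkhoffSup_le [Nonempty A] {n : ℕ} {w : Fin n → A} {c : ℝ}
    (h : ∀ x, block 0 n x = w → birkhoffSum shift1 ψ n x ≤ c) : birkhoffSup ψ n w ≤ c := by
  obtain ⟨x, hx⟩ := exists_block_eq w
  have : Nonempty {x // block 0 n x = w} := ⟨⟨x, hx⟩⟩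
  exact ciSup_le fun y => h y y.2

variable [Fintype A]

/-- The partition function of `ψ` restricted to a set `S` of words of length `n`. -/
noncomputable def partitionFunction (ψ : Cfg1 A → ℝ) {n : ℕ} (S : Set (Fin n → A)) : ℝ :=
  ∑ w, S.indicator (fun w => Real.exp (birkhoffSup ψ n w)) w

lemma partitionFunction_nonneg (ψ : Cfg1 A → ℝ) {n : ℕ} (S : Set (Fin n → A)) :
    0 ≤ partitionFunction ψ S :=
  Finset.sum_nonneg fun w _ => Set.indicator_nonneg (fun _ _ => (Real.exp_pos _).le) w

lemma partitionFunction_univ (ψ : Cfg1 A → ℝ) (n : ℕ) :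
    partitionFunction ψ (Set.univ : Set (Fin n → A)) = ∑ w, Real.exp (birkhoffSup ψ n w) := by
  simp [partitionFunction]

lemma partitionFunction_univ_pos [Nonempty A] (ψ : Cfg1 A → ℝ) (n : ℕ) :
    0 < partitionFunction ψ (Set.univ : Set (Fin n → A)) := by
  rw [partitionFunction_univ]
  exact Finset.sum_pos (fun _ _ => Real.exp_pos _) Finset.univ_nonempty

lemma partitionFunction_le_add_sum {ι : Type*} {n : ℕ} {S G : Set (Fin n → A)} {s : Finset ι}
    {B : ι → Set (Fin n → A)} (hcover : ∀ w ∈ S, w ∈ G ∨ ∃ m ∈ s, w ∈ B m) :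
    partitionFunction ψ S ≤ partitionFunction ψ G + ∑ m ∈ s, partitionFunction ψ (B m) := by
  simp only [partitionFunction]
  rw [Finset.sum_comm, ← Finset.sum_add_distrib]
  refine Finset.sum_le_sum fun w _ => ?_
  have hnonneg (T : Set (Fin n → A)) :
      0 ≤ T.indicator (fun w => Real.exp (birkhoffSup ψ n w)) w :=
    Set.indicator_nonneg (fun _ _ => (Real.exp_pos _).le) w
  have hsum := Finset.sum_nonneg fun m (_ : m ∈ s) => hnonneg (B m)
  by_cases hS : w ∈ S
  · rcases hcover w hS with hG | ⟨m, hm, hB⟩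
    · rw [Set.indicator_of_mem hS, Set.indicator_of_mem hG]
      exact le_add_of_nonneg_right hsum
    · have hle := Finset.single_le_sum (fun m _ => hnonneg (B m)) hm
      rw [Set.indicator_of_mem hB] at hle
      rw [Set.indicator_of_mem hS]
      exact le_add_of_nonneg_of_le (hnonneg G) hle
  · rw [Set.indicator_of_notMem hS]
    exact add_nonneg (hnonneg G) hsum

variable [Nonempty A]

lemma partitionFunction_le_ncard (hψ : ∀ x, ψ x ≤ 0) {n : ℕ} (S : Set (Fin n → A)) :
    partitionFunction ψ S ≤ S.ncard := by
  rw [← sum_indicator_one_eq_ncard]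
  exact Finset.sum_le_sum fun w _ => Set.indicator_le_indicator <| Real.exp_le_one_iff.2 <|
    birkhoffSup_le fun x _ => Finset.sum_nonpos fun _ _ => hψ _

lemma partitionFunction_le_mul (hψ : BddAbove (Set.range ψ)) {j k : ℕ}
    {B : Set (Fin (j + k) → A)} {U : Set (Fin j → A)} {c : ℝ}
    (hB : ∀ x, block 0 (j + k) x ∈ B → block 0 j x ∈ U ∧ birkhoffSum shift1 ψ j x ≤ c) :
    partitionFunction ψ B
      ≤ U.ncard * Real.exp c * partitionFunction ψ (Set.univ : Set (Fin k → A)) := by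
  rw [partitionFunction, ← (Fin.appendEquiv j k).sum_comp, Fintype.sum_prod_type,
    ← sum_indicator_one_eq_ncard, mul_assoc, Finset.sum_mul]
  simp only [partitionFunction_univ, Finset.mul_sum]
  refine Finset.sum_le_sum fun u _ => Finset.sum_le_sum fun v _ => ?_
  change B.indicator _ (Fin.append u v) ≤ _
  by_cases hw : Fin.append u v ∈ B
  · have hsplit {x : Cfg1 A} (hx : block 0 (j + k) x = Fin.append u v) :
        block 0 j x = u ∧ block 0 k (shift1^[j] x) = v ∧ birkhoffSum shift1 ψ j x ≤ c := by
      obtain ⟨hu, hv⟩ := block_eq_append_iff.1 hx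
      exact ⟨hu, by rwa [block_shift1_iterate, add_comm], (hB x (hx ▸ hw)).2⟩
    obtain ⟨x, hx⟩ := exists_block_eq (Fin.append u v)
    have hu : u ∈ U := (hsplit hx).1 ▸ (hB x (hx ▸ hw)).1
    rw [Set.indicator_of_mem hw, Set.indicator_of_mem hu, Pi.one_apply, one_mul, ← Real.exp_add]
    refine Real.exp_le_exp.2 (birkhoffSup_le fun y hy => ?_)
    obtain ⟨-, hv, hc⟩ := hsplit hy
    rw [birkhoffSum_add]
    exact add_le_add hc (hv ▸ birkhoffSum_le_birkhoffSup hψ k _)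
  · rw [Set.indicator_of_notMem hw]
    exact mul_nonneg (Set.indicator_nonneg (fun _ _ => zero_le_one) u) (by positivity)

end PartitionFunction

section VariationalInequality

variable {A : Type} [MeasurableSpace A] {ψ : Cfg1 A → ℝ} {μ : Measure (Cfg1 A)}

lemma Invariant1.integral_birkhoffSum (hμ : Invariant1 μ) (hψ : Integrable ψ μ) (n : ℕ) :
    Integrable (birkhoffSum shift1 ψ n) μ ∧
      ∫ x, birkhoffSum shift1 ψ n x ∂μ = n * ∫ x, ψ x ∂μ := by
  have hpres : MeasurePreserving shift1 μ μ := ⟨measurable_shift1, hμ⟩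
  have hint (i : ℕ) : Integrable (fun x => ψ (shift1^[i] x)) μ :=
    (hpres.iterate i).integrable_comp_of_integrable hψ
  have heq (i : ℕ) : ∫ x, ψ (shift1^[i] x) ∂μ = ∫ x, ψ x ∂μ := by
    have hmap := (hpres.iterate i).map_eq
    conv_rhs => rw [← hmap]
    exact (integral_map (hpres.iterate i).measurable.aemeasurable
      (hmap.symm ▸ hψ.aestronglyMeasurable)).symm
  refine ⟨integrable_finsetSum _ fun i _ => hint i, ?_⟩
  simp only [birkhoffSum, integral_finsetSum _ fun i _ => hint i, heq, Finset.sum_const,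
    Finset.card_range, nsmul_eq_mul]

variable [MeasurableSingletonClass A] [Fintype A] [IsProbabilityMeasure μ]

lemma integral_comp_block (n : ℕ) (g : (Fin n → A) → ℝ) :
    ∫ x, g (block 0 n x) ∂μ = ∑ w, blockLaw μ 0 n w * g w := by
  have hblock : Measurable (block (A := A) 0 n) := measurable_block 0 n
  have := Measure.isProbabilityMeasure_map (μ := μ) hblock.aemeasurable
  rw [← integral_map hblock.aemeasurable (measurable_of_finite g).aestronglyMeasurable,
    integral_fintype .of_finite]
  simp [blockLaw, measureReal_def, Measure.map_apply hblock (measurableSet_singleton _)]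

theorem mul_entropy1_add_integral_le_log_partitionFunction (hμ : Invariant1 μ)
    (hψ : Integrable ψ μ) (hbdd : BddAbove (Set.range ψ)) (n : ℕ) :
    n * (entropy1 μ + ∫ x, ψ x ∂μ)
      ≤ Real.log (partitionFunction ψ (Set.univ : Set (Fin n → A))) := by
  have hgibbs := shannonEntropy_add_sum_mul_log_le (blockLaw_mem_stdSimplex μ 0 n)
    (q := fun w => Real.exp (birkhoffSup ψ n w)) (fun _ => (Real.exp_pos _).le)
    fun w hw => absurd hw (Real.exp_pos _).ne'
  simp only [Real.log_exp, ← integral_comp_block, ← partitionFunction_univ] at hgibbs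
  obtain ⟨hint, hsum⟩ := hμ.integral_birkhoffSum hψ n
  have hblock : Measurable (block (A := A) 0 n) := measurable_block 0 n
  have := Measure.isProbabilityMeasure_map (μ := μ) hblock.aemeasurable
  have hintSup : Integrable (fun x => birkhoffSup ψ n (block 0 n x)) μ :=
    (Integrable.of_finite (f := birkhoffSup ψ n)).comp_measurable hblock
  have hle : n * ∫ x, ψ x ∂μ ≤ ∫ x, birkhoffSup ψ n (block 0 n x) ∂μ :=
    hsum ▸ integral_mono hint hintSup (birkhoffSum_le_birkhoffSup hbdd n)
  have hent : n * entropy1 μ ≤ shannonEntropy (blockLaw μ 0 n) := nat_mul_entropy1_le μ n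
  linarith

end VariationalInequality

section DistancePotential

variable {A : Type} {X₀ : Set (Cfg1 A)} {a : ℕ → ℝ} {φ : Cfg1 A → ℝ} {x y : Cfg1 A} {k : ℕ}

lemma two_zpow_neg_le_dist1 {t : ℕ} (htk : t ≤ k) (ht : x t ≠ y t) :
    (2 : ℝ) ^ (-(k : ℤ)) ≤ dist1 x y := by
  rw [dist1, if_neg fun hxy => ht (congrFun hxy t)]
  have hinf : sInf {i | x i ≠ y i} ≤ k := (Nat.sInf_le ht).trans htk
  exact zpow_le_zpow_right₀ one_le_two (by lia)

lemma dist1_le_two_zpow_neg (hxy : ∀ t < k, x t = y t) : dist1 x y ≤ (2 : ℝ) ^ (-(k : ℤ)) := by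
  rw [dist1]
  split_ifs with heq
  · positivity
  · obtain ⟨t, ht⟩ := Function.ne_iff.1 heq
    have hinf : k ≤ sInf {i | x i ≠ y i} :=
      le_csInf ⟨t, ht⟩ fun i hi => not_lt.1 fun hik => hi (hxy i hik)
    exact zpow_le_zpow_right₀ one_le_two (by lia)

lemma distToSub1_eq_two_zpow_neg (hk : Admissible X₀ x 0 k) (hk1 : ¬ Admissible X₀ x 0 (k + 1)) :
    distToSub1 X₀ x = (2 : ℝ) ^ (-(k : ℤ)) := by
  have hdist {y : Cfg1 A} (hy : y ∈ X₀) : (2 : ℝ) ^ (-(k : ℤ)) ≤ dist1 x y := by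
    obtain ⟨t, ht, hxy⟩ : ∃ t < k + 1, y t ≠ x t := by
      by_contra! h
      exact hk1 (admissible_iff.2 ⟨y, hy, fun t ht => by rw [zero_add, h t ht]⟩)
    exact two_zpow_neg_le_dist1 (Nat.le_of_lt_succ ht) hxy.symm
  obtain ⟨y, hy, hyx⟩ := admissible_iff.1 hk
  have hxy : dist1 x y = (2 : ℝ) ^ (-(k : ℤ)) :=
    (dist1_le_two_zpow_neg fun t ht => by rw [hyx t ht, zero_add]).antisymm (hdist hy)
  refine IsLeast.csInf_eq ⟨⟨y, hy, hxy.symm⟩, ?_⟩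
  rintro _ ⟨z, hz, rfl⟩
  exact hdist hz

/-- `φ` is the potential which penalizes with `a j` the points at distance `2 ^ (-j)` from `X₀`. -/
structure IsDistancePotential (X₀ : Set (Cfg1 A)) (a : ℕ → ℝ) (φ : Cfg1 A → ℝ) : Prop where
  eq_zero : ∀ x ∈ X₀, φ x = 0
  eq_neg : ∀ x ∉ X₀, ∀ j : ℕ, distToSub1 X₀ x = (2 : ℝ) ^ (-(j : ℤ)) → φ x = -a j

lemma IsDistancePotential.eq_neg_of_admissible (hφ : IsDistancePotential X₀ a φ)
    (hk : Admissible X₀ x 0 k) (hk1 : ¬ Admissible X₀ x 0 (k + 1)) : φ x = -a k :=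
  hφ.eq_neg x (fun hx => hk1 (admissible_of_mem hx _)) k (distToSub1_eq_two_zpow_neg hk hk1)

lemma IsDistancePotential.const_mul (hφ : IsDistancePotential X₀ a φ) (β : ℝ) :
    IsDistancePotential X₀ (fun j => β * a j) fun x => β * φ x where
  eq_zero x hx := by rw [hφ.eq_zero x hx, mul_zero]
  eq_neg x hx j hj := by rw [hφ.eq_neg x hx j hj, mul_neg]

variable [TopologicalSpace A]

lemma exists_admissible_not_admissible_succ (hX : IsSubshift1 X₀) (hx : x ∉ X₀) :
    ∃ k, Admissible X₀ x 0 k ∧ ¬ Admissible X₀ x 0 (k + 1) := by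
  by_contra! h
  obtain ⟨k, hk⟩ := exists_not_admissible hX hx
  exact hk (Nat.rec (admissible_zero_right hX x 0) h k)

lemma IsDistancePotential.le_neg (hφ : IsDistancePotential X₀ a φ) (hX : IsSubshift1 X₀)
    (ha : Antitone a) (hk : ¬ Admissible X₀ x 0 (k + 1)) : φ x ≤ -a k := by
  obtain ⟨l, hl, hl1⟩ :=
    exists_admissible_not_admissible_succ hX fun hx => hk (admissible_of_mem hx _)
  rw [hφ.eq_neg_of_admissible hl hl1]
  exact neg_le_neg (ha (not_lt.1 fun hkl => hk (hl.mono hX le_rfl (by lia))))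

lemma IsDistancePotential.continuousOn_compl [DiscreteTopology A]
    (hφ : IsDistancePotential X₀ a φ) (hX : IsSubshift1 X₀) : ContinuousOn φ X₀ᶜ := by
  intro x hx
  obtain ⟨k, hk, hk1⟩ := exists_admissible_not_admissible_succ hX hx
  have hcont : Continuous (block (A := A) 0 (k + 1)) :=
    continuous_pi fun t => continuous_apply _
  have hnear : ∀ᶠ y in 𝓝 x, block 0 (k + 1) y = block 0 (k + 1) x :=
    ((isOpen_discrete {block 0 (k + 1) x}).preimage hcont).mem_nhds rfl
  refine ContinuousAt.continuousWithinAt (continuousAt_const.congr (f := fun _ => φ x) ?_)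
  filter_upwards [hnear] with y hy
  rw [hφ.eq_neg_of_admissible hk hk1, hφ.eq_neg_of_admissible (x := y)
    ((admissible_congr hy (by lia)).2 hk) (mt (admissible_congr hy (by lia)).1 hk1)]

/-- A penalty for leaving `X₀`: a nonpositive bounded potential whose zero set is `X₀`. -/
structure IsPenalty [MeasurableSpace A] (X₀ : Set (Cfg1 A)) (φ : Cfg1 A → ℝ) : Prop where
  measurable : Measurable φ
  bddBelow : BddBelow (Set.range φ)
  nonpos : ∀ x, φ x ≤ 0
  eq_zero_iff : ∀ x, φ x = 0 ↔ x ∈ X₀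

lemma IsDistancePotential.isPenalty [DiscreteTopology A] [Finite A] [MeasurableSpace A]
    [BorelSpace A] (hφ : IsDistancePotential X₀ a φ) (hX : IsSubshift1 X₀) (ha : Antitone a)
    (hpos : ∀ j, 0 < a j) : IsPenalty X₀ φ where
  measurable := by
    have hzero : X₀.domRestrict φ = fun _ => 0 := funext fun x => hφ.eq_zero x x.2
    exact measurable_of_restrict_of_restrict_compl hX.2.1.measurableSet
      (hzero ▸ measurable_const) (hφ.continuousOn_compl hX).domRestrict.measurable
  bddBelow := by
    refine ⟨-a 0, Set.forall_mem_range.2 fun x => ?_⟩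
    by_cases hx : x ∈ X₀
    · exact (neg_nonpos.2 (hpos 0).le).trans (hφ.eq_zero x hx).ge
    · obtain ⟨k, hk, hk1⟩ := exists_admissible_not_admissible_succ hX hx
      exact (neg_le_neg (ha k.zero_le)).trans (hφ.eq_neg_of_admissible hk hk1).ge
  nonpos x := by
    by_cases hx : x ∈ X₀
    · exact (hφ.eq_zero x hx).le
    · obtain ⟨k, hk, hk1⟩ := exists_admissible_not_admissible_succ hX hx
      exact (hφ.eq_neg_of_admissible hk hk1).trans_le (neg_nonpos.2 (hpos k).le)
  eq_zero_iff x := by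
    refine ⟨fun h => by_contra fun hx => ?_, hφ.eq_zero x⟩
    obtain ⟨k, hk, hk1⟩ := exists_admissible_not_admissible_succ hX hx
    linarith [hpos k, hφ.eq_neg_of_admissible hk hk1]

end DistancePotential

section DyadicBlocks

variable {A : Type} {X₀ : Set (Cfg1 A)} {x y : Cfg1 A} {i m n : ℕ}

/-- The `i`-th dyadic block `[2 ^ i - 1, 2 ^ (i + 1) - 1)` of `x`, truncated at `n`, is admissible.
For `i = 0, 1, 2, …` these blocks partition `[0, n)`, all but finitely many of them being empty. -/
def DyadicAdmissible (X₀ : Set (Cfg1 A)) (n : ℕ) (x : Cfg1 A) (i : ℕ) : Prop :=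
  Admissible X₀ x (2 ^ i - 1) (min (2 ^ i) (n - (2 ^ i - 1)))

/-- The words of length `n` all of whose dyadic blocks are admissible. -/
def dyadicWords (X₀ : Set (Cfg1 A)) (n : ℕ) : Set (Fin n → A) :=
  {w | ∃ x, block 0 n x = w ∧ ∀ i, DyadicAdmissible X₀ n x i}

/-- The words of length `n` whose first non-admissible dyadic block has index `m`. -/
def firstFailureWords (X₀ : Set (Cfg1 A)) (n m : ℕ) : Set (Fin n → A) :=
  {w | ∃ x, block 0 n x = w ∧ (∀ i < m, DyadicAdmissible X₀ n x i) ∧ ¬ DyadicAdmissible X₀ n x m}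

lemma dyadicAdmissible_congr (hxy : block 0 n x = block 0 n y) :
    DyadicAdmissible X₀ n x i ↔ DyadicAdmissible X₀ n y i :=
  admissible_congr hxy (by lia)

lemma block_mem_firstFailureWords_iff : block 0 n x ∈ firstFailureWords X₀ n m ↔
    (∀ i < m, DyadicAdmissible X₀ n x i) ∧ ¬ DyadicAdmissible X₀ n x m := by
  refine ⟨?_, fun h => ⟨x, rfl, h⟩⟩
  rintro ⟨y, hy, hlt, hm⟩
  exact ⟨fun i hi => (dyadicAdmissible_congr hy).1 (hlt i hi), mt (dyadicAdmissible_congr hy).2 hm⟩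

variable [TopologicalSpace A] (hX : IsSubshift1 X₀)

include hX

lemma dyadicAdmissible_of_le (x : Cfg1 A) (hn : n ≤ 2 ^ i - 1) : DyadicAdmissible X₀ n x i := by
  rw [DyadicAdmissible, Nat.sub_eq_zero_of_le hn, Nat.min_zero]
  exact admissible_zero_right hX x _

lemma DyadicAdmissible.mono {k : ℕ} (h : DyadicAdmissible X₀ n x i) (hkn : k ≤ n) :
    DyadicAdmissible X₀ k x i :=
  Admissible.mono hX h le_rfl (by lia)

lemma firstFailureWords_eq_empty (hn : n ≤ 2 ^ m - 1) : firstFailureWords X₀ n m = ∅ :=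
  Set.eq_empty_of_forall_notMem fun _ ⟨x, _, _, hm⟩ => hm (dyadicAdmissible_of_le hX x hn)

lemma mem_dyadicWords_or_mem_firstFailureWords (w : Fin n → A) :
    w ∈ dyadicWords X₀ n ∨ ∃ m ∈ Finset.range n, w ∈ firstFailureWords X₀ n m := by
  have := hX.nonempty_alphabet
  obtain ⟨x, rfl⟩ := exists_block_eq w
  by_cases hall : ∀ i, DyadicAdmissible X₀ n x i
  · exact .inl ⟨x, rfl, hall⟩
  · push Not at hall
    refine .inr ⟨Nat.find hall, Finset.mem_range.2 (not_le.1 fun hn => Nat.find_spec hall ?_),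
      x, rfl, fun i hi => not_not.1 (Nat.find_min hall hi), Nat.find_spec hall⟩
    exact dyadicAdmissible_of_le hX x (hn.trans (Nat.le_pred_of_lt Nat.lt_two_pow_self))

lemma block_mem_dyadicWords_of_mem_firstFailureWords
    (h : block 0 n x ∈ firstFailureWords X₀ n m) (hn : 2 ^ m - 1 ≤ n) :
    block 0 (2 ^ m - 1) x ∈ dyadicWords X₀ (2 ^ m - 1) := by
  refine ⟨x, rfl, fun i => ?_⟩
  rcases lt_or_ge i m with hi | hi
  · exact ((block_mem_firstFailureWords_iff.1 h).1 i hi).mono hX hn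
  · exact dyadicAdmissible_of_le hX x
      (Nat.sub_le_sub_right (Nat.pow_le_pow_right two_pos hi) 1)

variable [Finite A]

lemma ncard_dyadicWords_add_le {r : ℕ} (hr : r ≤ 2 ^ m) :
    (dyadicWords X₀ (2 ^ m - 1 + r)).ncard
      ≤ (dyadicWords X₀ (2 ^ m - 1)).ncard * (lang1 X₀ r).ncard := by
  rw [← Set.ncard_prod]
  refine Set.ncard_le_ncard_of_injOn (Fin.appendEquiv (2 ^ m - 1) r).symm ?_
    (Equiv.injective _).injOn (Set.toFinite _)
  rintro _ ⟨x, rfl, hx⟩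
  obtain ⟨⟨u, v⟩, huv⟩ := (Fin.appendEquiv (2 ^ m - 1) r).surjective (block 0 (2 ^ m - 1 + r) x)
  obtain ⟨hu, hv⟩ := block_eq_append_iff.1 huv.symm
  rw [← huv, Equiv.symm_apply_apply]
  refine ⟨⟨x, hu, fun i => (hx i).mono hX (Nat.le_add_right _ _)⟩, ?_⟩
  have hlast := hx m
  rwa [DyadicAdmissible, Nat.add_sub_cancel_left, min_eq_right hr, ← zero_add (2 ^ m - 1),
    Admissible, hv] at hlast

lemma ncard_dyadicWords_two_pow_sub_one_le (m : ℕ) : ((dyadicWords X₀ (2 ^ m - 1)).ncard : ℝ)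
    ≤ Real.exp (∑ i ∈ Finset.range m, Real.log (lang1 X₀ (2 ^ i)).ncard) := by
  induction m with
  | zero => simpa using Set.subsingleton_of_subsingleton
  | succ m ih =>
    have hsucc := ncard_dyadicWords_add_le hX (m := m) le_rfl
    have hlen : 2 ^ m - 1 + 2 ^ m = 2 ^ (m + 1) - 1 := by
      have := Nat.one_le_two_pow (n := m)
      lia
    rw [hlen] at hsucc
    rw [Finset.sum_range_succ, Real.exp_add, Real.exp_log (mod_cast ncard_lang1_pos hX _)]
    calc ((dyadicWords X₀ (2 ^ (m + 1) - 1)).ncard : ℝ)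
        ≤ (dyadicWords X₀ (2 ^ m - 1)).ncard * (lang1 X₀ (2 ^ m)).ncard := mod_cast hsucc
      _ ≤ _ := by gcongr

lemma exists_ncard_dyadicWords_le {θ : ℝ} (hθ : topEnt1 X₀ < θ) :
    ∃ D, 0 < D ∧ ∀ n : ℕ, ((dyadicWords X₀ n).ncard : ℝ) ≤ D * Real.exp (n * θ) := by
  obtain ⟨C, hC⟩ := exists_log_ncard_lang1_le hX hθ
  obtain ⟨C', hC'⟩ := exists_sum_log_ncard_lang1_two_pow_le hX hθ
  refine ⟨Real.exp (C' + C), Real.exp_pos _, fun n => ?_⟩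
  obtain ⟨m, r, hr, rfl⟩ : ∃ m r, r ≤ 2 ^ m ∧ n = 2 ^ m - 1 + r := by
    have hle := Nat.pow_log_le_self 2 n.succ_ne_zero
    have hlt := Nat.lt_pow_succ_log_self one_lt_two n.succ
    exact ⟨Nat.log 2 n.succ, n.succ - 2 ^ Nat.log 2 n.succ, by lia,
      by have := Nat.one_le_two_pow (n := Nat.log 2 n.succ); lia⟩
  have hlang : ((lang1 X₀ r).ncard : ℝ) ≤ Real.exp (C + r * θ) :=
    (Real.log_le_iff_le_exp (mod_cast ncard_lang1_pos hX r)).1 (hC r)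
  calc ((dyadicWords X₀ (2 ^ m - 1 + r)).ncard : ℝ)
      ≤ (dyadicWords X₀ (2 ^ m - 1)).ncard * (lang1 X₀ r).ncard :=
        mod_cast ncard_dyadicWords_add_le hX hr
    _ ≤ Real.exp (C' + (2 ^ m - 1 : ℕ) * θ) * Real.exp (C + r * θ) := by
        gcongr
        exact (ncard_dyadicWords_two_pow_sub_one_le hX m).trans (Real.exp_le_exp.2 (hC' m))
    _ = Real.exp (C' + C) * Real.exp ((2 ^ m - 1 + r : ℕ) * θ) := by
        rw [← Real.exp_add, ← Real.exp_add, Nat.cast_add]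
        ring_nf

end DyadicBlocks

section RenewalInequality

lemma le_two_mul_exp_of_renewal {Z : ℕ → ℝ} {E : ℕ → ℕ → ℝ} {b : ℕ → ℝ} {D θ : ℝ} (hD : 0 ≤ D)
    (hb : ∀ m, 0 ≤ b m) (hbsum : ∀ n, ∑ m ∈ Finset.range n, b m ≤ 1 / 2)
    (hZ : ∀ n : ℕ, Z n ≤ D * Real.exp (n * θ) + ∑ m ∈ Finset.range n, E n m)
    (hE : ∀ n m : ℕ, E n m ≤ 0 ∨ ∃ k < n, E n m ≤ b m * Real.exp ((n - k) * θ) * Z k) (n : ℕ) :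
    Z n ≤ 2 * D * Real.exp (n * θ) := by
  induction n using Nat.strong_induction_on with
  | _ n ih =>
  have hEle (m : ℕ) : E n m ≤ b m * (2 * D * Real.exp (n * θ)) := by
    have := hb m
    rcases hE n m with h | ⟨k, hk, h⟩
    · exact h.trans (by positivity)
    · calc E n m ≤ b m * Real.exp ((n - k) * θ) * Z k := h
        _ ≤ b m * Real.exp ((n - k) * θ) * (2 * D * Real.exp (k * θ)) := by
            gcongr
            exact ih k hk
        _ = b m * (2 * D * (Real.exp ((n - k) * θ) * Real.exp (k * θ))) := by ring
        _ = b m * (2 * D * Real.exp (n * θ)) := by rw [← Real.exp_add]; ring_nf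
  calc Z n ≤ D * Real.exp (n * θ) + ∑ m ∈ Finset.range n, E n m := hZ n
    _ ≤ D * Real.exp (n * θ) + (∑ m ∈ Finset.range n, b m) * (2 * D * Real.exp (n * θ)) := by
        rw [Finset.sum_mul]
        gcongr
        exact hEle _
    _ ≤ D * Real.exp (n * θ) + 1 / 2 * (2 * D * Real.exp (n * θ)) := by gcongr; exact hbsum n
    _ = 2 * D * Real.exp (n * θ) := by ring

end RenewalInequality

section PartitionFunctionGrowth

variable {A : Type} [TopologicalSpace A] {X₀ : Set (Cfg1 A)} {a : ℕ → ℝ}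
  {φ : Cfg1 A → ℝ} (hX : IsSubshift1 X₀) (hφ : IsDistancePotential X₀ a φ) (ha : Antitone a)
  (hφ0 : ∀ x, φ x ≤ 0)

include hX

lemma ncard_dyadicWords_mul_exp_neg_le [Finite A] {m : ℕ} {c θ : ℝ} (hθ : topEnt1 X₀ ≤ θ)
    (hc : (m + 2) * Real.log 2 + entropyExcess X₀ m ≤ c) :
    (dyadicWords X₀ (2 ^ m - 1)).ncard * Real.exp (-c)
      ≤ 1 / 4 * (1 / 2) ^ m * Real.exp ((2 ^ m - 1 : ℕ) * θ) := by
  have hpow : Real.exp (-((m + 2) * Real.log 2)) = 1 / 4 * (1 / 2) ^ m := by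
    rw [Real.exp_neg, ← Nat.cast_ofNat (R := ℝ) (n := 2), ← Nat.cast_add, Real.exp_nat_mul,
      Real.exp_log (by norm_num), Nat.cast_ofNat, ← inv_pow, pow_add]
    norm_num [mul_comm]
  have hent : ((2 ^ m - 1 : ℕ) : ℝ) * topEnt1 X₀ ≤ (2 ^ m - 1 : ℕ) * θ := by gcongr
  have hword := ncard_dyadicWords_two_pow_sub_one_le hX m
  rw [sum_log_ncard_lang1_two_pow] at hword
  calc (dyadicWords X₀ (2 ^ m - 1)).ncard * Real.exp (-c)
      ≤ Real.exp (entropyExcess X₀ m + (2 ^ m - 1 : ℕ) * topEnt1 X₀) * Real.exp (-c) := by gcongr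
    _ ≤ Real.exp (-((m + 2) * Real.log 2)) * Real.exp ((2 ^ m - 1 : ℕ) * θ) := by
        rw [← Real.exp_add, ← Real.exp_add]
        exact Real.exp_le_exp.2 (by linarith)
    _ = 1 / 4 * (1 / 2) ^ m * Real.exp ((2 ^ m - 1 : ℕ) * θ) := by rw [hpow]

include hφ ha

lemma birkhoffSum_le_of_not_dyadicAdmissible {m n : ℕ} {x : Cfg1 A} (hm : 1 ≤ m)
    (hx : ¬ DyadicAdmissible X₀ n x m) :
    birkhoffSum shift1 φ (2 ^ m - 1) x ≤ -((2 ^ m - 1 : ℕ) * a (3 * (2 ^ m - 1))) := by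
  have hj : 1 ≤ 2 ^ m - 1 := hm.trans (Nat.le_pred_of_lt Nat.lt_two_pow_self)
  have hterm (i : ℕ) (hi : i ∈ Finset.range (2 ^ m - 1)) :
      φ (shift1^[i] x) ≤ -a (3 * (2 ^ m - 1)) := by
    refine hφ.le_neg hX ha fun h => hx ?_
    rw [admissible_shift1_iterate, add_zero] at h
    exact h.mono hX (Finset.mem_range.1 hi).le (by lia)
  simpa [birkhoffSum] using Finset.sum_le_card_nsmul _ _ _ hterm

variable [Fintype A]

include hφ0

lemma partitionFunction_firstFailureWords_le {m : ℕ} (hm : 1 ≤ m) (k : ℕ) :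
    partitionFunction φ (firstFailureWords X₀ (2 ^ m - 1 + k) m)
      ≤ (dyadicWords X₀ (2 ^ m - 1)).ncard
        * Real.exp (-((2 ^ m - 1 : ℕ) * a (3 * (2 ^ m - 1))))
        * partitionFunction φ (Set.univ : Set (Fin k → A)) := by
  have := hX.nonempty_alphabet
  refine partitionFunction_le_mul ⟨0, Set.forall_mem_range.2 hφ0⟩ fun x hx => ?_
  exact ⟨block_mem_dyadicWords_of_mem_firstFailureWords hX hx (Nat.le_add_right _ _),
    birkhoffSum_le_of_not_dyadicAdmissible hX hφ ha hm (block_mem_firstFailureWords_iff.1 hx).2⟩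

lemma partitionFunction_firstFailureWords_zero_le (k : ℕ) :
    partitionFunction φ (firstFailureWords X₀ (1 + k) 0)
      ≤ Nat.card A * Real.exp (-a 0) * partitionFunction φ (Set.univ : Set (Fin k → A)) := by
  have := hX.nonempty_alphabet
  have hcard : (Set.univ : Set (Fin 1 → A)).ncard = Nat.card A := by simp [Set.ncard_univ]
  rw [← hcard]
  refine partitionFunction_le_mul ⟨0, Set.forall_mem_range.2 hφ0⟩ fun x hx => ⟨trivial, ?_⟩
  have hfail : ¬ Admissible X₀ x 0 (0 + 1) := by
    simpa [DyadicAdmissible] using (block_mem_firstFailureWords_iff.1 hx).2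
  simpa using hφ.le_neg hX ha hfail

lemma partitionFunction_firstFailureWords_nonpos_or_le {θ : ℝ} (hθ : topEnt1 X₀ ≤ θ)
    (h0 : Nat.card A * Real.exp (-a 0) ≤ 1 / 4)
    (hm : ∀ m, 1 ≤ m →
      (m + 2) * Real.log 2 + entropyExcess X₀ m ≤ (2 ^ m - 1 : ℕ) * a (3 * (2 ^ m - 1)))
    (n m : ℕ) :
    partitionFunction φ (firstFailureWords X₀ n m) ≤ 0 ∨
      ∃ k < n, partitionFunction φ (firstFailureWords X₀ n m)
        ≤ 1 / 4 * (1 / 2) ^ m * Real.exp ((n - k) * θ)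
          * partitionFunction φ (Set.univ : Set (Fin k → A)) := by
  rcases le_or_gt n (2 ^ m - 1) with hn | hn
  · simp [firstFailureWords_eq_empty hX hn, partitionFunction]
  refine .inr ?_
  rcases m.eq_zero_or_pos with rfl | hm1
  · obtain ⟨k, rfl⟩ := Nat.exists_eq_add_of_le (show 1 ≤ n from hn)
    refine ⟨k, by lia, (partitionFunction_firstFailureWords_zero_le hX hφ ha hφ0 k).trans
      (mul_le_mul_of_nonneg_right (h0.trans ?_) (partitionFunction_nonneg φ _))⟩
    rw [Nat.cast_add, Nat.cast_one, add_sub_cancel_right, one_mul, pow_zero, mul_one]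
    exact le_mul_of_one_le_right (by norm_num)
      (Real.one_le_exp ((topEnt1_nonneg X₀).trans hθ))
  · obtain ⟨k, rfl⟩ := Nat.exists_eq_add_of_le hn.le
    have hlt : m < 2 ^ m := Nat.lt_two_pow_self
    refine ⟨k, by lia, (partitionFunction_firstFailureWords_le hX hφ ha hφ0 hm1 k).trans
      (mul_le_mul_of_nonneg_right ?_ (partitionFunction_nonneg φ _))⟩
    rw [Nat.cast_add, add_sub_cancel_right]
    exact ncard_dyadicWords_mul_exp_neg_le hX hθ (hm m hm1)

theorem exists_partitionFunction_le {θ : ℝ} (hθ : topEnt1 X₀ < θ)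
    (h0 : Nat.card A * Real.exp (-a 0) ≤ 1 / 4)
    (hm : ∀ m, 1 ≤ m →
      (m + 2) * Real.log 2 + entropyExcess X₀ m ≤ (2 ^ m - 1 : ℕ) * a (3 * (2 ^ m - 1))) :
    ∃ D, 0 < D ∧ ∀ n : ℕ,
      partitionFunction φ (Set.univ : Set (Fin n → A)) ≤ D * Real.exp (n * θ) := by
  have := hX.nonempty_alphabet
  obtain ⟨D, hD, hgood⟩ := exists_ncard_dyadicWords_le hX hθ
  refine ⟨2 * D, by positivity, le_two_mul_exp_of_renewal hD.le
    (b := fun m => 1 / 4 * (1 / 2) ^ m) (fun m => by positivity) (fun n => ?_) (fun n => ?_)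
    (partitionFunction_firstFailureWords_nonpos_or_le hX hφ ha hφ0 hθ.le h0 hm)⟩
  · rw [← Finset.mul_sum]
    linarith [sum_geometric_two_le n]
  · exact (partitionFunction_le_add_sum fun w _ =>
      mem_dyadicWords_or_mem_firstFailureWords hX w).trans
        (by gcongr; exact (partitionFunction_le_ncard hφ0 _).trans (hgood n))

end PartitionFunctionGrowth

section Freezing

variable {A : Type} {X₀ : Set (Cfg1 A)} {φ : Cfg1 A → ℝ} {β β' : ℝ}
  [MeasurableSpace A]

section Penalty

variable {μ : Measure (Cfg1 A)}

lemma IsPenalty.integral_nonpos (hφ : IsPenalty X₀ φ) (μ : Measure (Cfg1 A)) :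
    ∫ x, φ x ∂μ ≤ 0 :=
  MeasureTheory.integral_nonpos hφ.nonpos

variable [IsProbabilityMeasure μ]

lemma IsPenalty.integrable (hφ : IsPenalty X₀ φ) : Integrable φ μ := by
  obtain ⟨c, hc⟩ := hφ.bddBelow
  refine Integrable.of_bound hφ.measurable.aestronglyMeasurable (-c) (ae_of_all _ fun x => ?_)
  rw [Real.norm_of_nonpos (hφ.nonpos x)]
  exact neg_le_neg (hc (Set.mem_range_self x))

lemma IsPenalty.integral_eq_zero_iff (hφ : IsPenalty X₀ φ) (hX : MeasurableSet X₀) :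
    ∫ x, φ x ∂μ = 0 ↔ μ X₀ = 1 := by
  rw [← mem_ae_iff_prob_eq_one hX, ← neg_eq_zero, ← integral_neg,
    integral_eq_zero_iff_of_nonneg (fun x => neg_nonneg.2 (hφ.nonpos x)) hφ.integrable.neg]
  refine Filter.eventually_congr (.of_forall fun x => ?_)
  rw [Pi.zero_apply, neg_eq_zero]
  exact hφ.eq_zero_iff x

lemma IsPenalty.exists_le_integral (hφ : IsPenalty X₀ φ) :
    ∃ c, ∀ μ : Measure (Cfg1 A), IsProbabilityMeasure μ → c ≤ ∫ x, φ x ∂μ := by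
  obtain ⟨c, hc⟩ := hφ.bddBelow
  refine ⟨c, fun μ hμ => ?_⟩
  simpa using integral_mono (integrable_const c) (hφ.integrable (μ := μ))
    fun x => hc (Set.mem_range_self x)

end Penalty

variable [Fintype A]

/-- The inverse temperatures at which the pressure of `φ` equals the topological entropy of `X₀`,
that is, at which leaving `X₀` no longer increases the pressure. -/
def frozenSet (X₀ : Set (Cfg1 A)) (φ : Cfg1 A → ℝ) : Set ℝ :=
  {β | pressure1 φ β = topEnt1 X₀}

lemma IsPenalty.le_pressure1 [MeasurableSingletonClass A] (hφ : IsPenalty X₀ φ) (β : ℝ)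
    {μ : Measure (Cfg1 A)} (hprob : IsProbabilityMeasure μ) (hinv : Invariant1 μ) :
    entropy1 μ + β * ∫ x, φ x ∂μ ≤ pressure1 φ β := by
  obtain ⟨c, hc⟩ := hφ.exists_le_integral
  refine le_csSup ⟨topEnt1 (Set.univ : Set (Cfg1 A)) + |β| * -c, ?_⟩ ⟨μ, hprob, hinv, rfl⟩
  rintro _ ⟨ν, hνprob, -, rfl⟩
  refine add_le_add (entropy1_le_topEnt1 .univ measure_univ) ((le_abs_self _).trans ?_)
  rw [abs_mul, abs_of_nonpos (hφ.integral_nonpos ν)]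
  exact mul_le_mul_of_nonneg_left (neg_le_neg (hc ν hνprob)) (abs_nonneg β)

variable [TopologicalSpace A] [DiscreteTopology A] [BorelSpace A]

lemma IsMME1.entropy1_add_mul_integral_eq {μ : Measure (Cfg1 A)} (hμ : IsMME1 X₀ μ)
    (hφ : IsPenalty X₀ φ) (hX : IsSubshift1 X₀) (β : ℝ) :
    entropy1 μ + β * ∫ x, φ x ∂μ = topEnt1 X₀ := by
  obtain ⟨hprob, -, hone, hent⟩ := hμ
  rw [(hφ.integral_eq_zero_iff hX.2.1.measurableSet).2 hone, mul_zero, add_zero, hent]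

lemma IsMME1.mem_ES1_iff {μ : Measure (Cfg1 A)} (hμ : IsMME1 X₀ μ) (hφ : IsPenalty X₀ φ)
    (hX : IsSubshift1 X₀) : μ ∈ ES1 φ β ↔ β ∈ frozenSet X₀ φ := by
  refine ⟨fun h => ?_, fun h => ⟨hμ.1, hμ.2.1, ?_⟩⟩
  · exact h.2.2.symm.trans (hμ.entropy1_add_mul_integral_eq hφ hX β)
  · exact (hμ.entropy1_add_mul_integral_eq hφ hX β).trans h.symm

lemma mem_frozenSet_iff (hφ : IsPenalty X₀ φ) (hX : IsSubshift1 X₀) :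
    β ∈ frozenSet X₀ φ ↔ ∀ μ : Measure (Cfg1 A), IsProbabilityMeasure μ → Invariant1 μ →
      entropy1 μ + β * ∫ x, φ x ∂μ ≤ topEnt1 X₀ := by
  refine ⟨fun h μ hprob hinv => h ▸ hφ.le_pressure1 β hprob hinv, fun h => ?_⟩
  obtain ⟨μ, hμ⟩ := exists_isMME1 hX
  refine le_antisymm (csSup_le ⟨_, μ, hμ.1, hμ.2.1, rfl⟩ ?_) ?_
  · rintro _ ⟨ν, hprob, hinv, rfl⟩
    exact h ν hprob hinv
  · exact (hμ.entropy1_add_mul_integral_eq hφ hX β).ge.trans (hφ.le_pressure1 β hμ.1 hμ.2.1)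

lemma frozenSet_isUpperSet (hφ : IsPenalty X₀ φ) (hX : IsSubshift1 X₀) :
    IsUpperSet (frozenSet X₀ φ) := by
  intro β β' hle hβ
  rw [mem_frozenSet_iff hφ hX] at hβ ⊢
  intro μ hprob hinv
  have hmul := mul_le_mul_of_nonpos_right hle (hφ.integral_nonpos μ)
  linarith [hβ μ hprob hinv]

lemma ES1_eq_of_lt (hφ : IsPenalty X₀ φ) (hX : IsSubshift1 X₀) (hβ : β ∈ frozenSet X₀ φ)
    (hlt : β < β') : ES1 φ β' = {μ | IsMME1 X₀ μ} := by
  have hβ' : β' ∈ frozenSet X₀ φ := frozenSet_isUpperSet hφ hX hlt.le hβ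
  ext μ
  refine ⟨fun ⟨hprob, hinv, heq⟩ => ?_, fun hμ => (hμ.mem_ES1_iff hφ hX).2 hβ'⟩
  have hle := (mem_frozenSet_iff hφ hX).1 hβ μ hprob hinv
  have heq' : entropy1 μ + β' * ∫ x, φ x ∂μ = topEnt1 X₀ := heq.trans hβ'
  have hzero : ∫ x, φ x ∂μ = 0 := (hφ.integral_nonpos μ).antisymm <|
    nonneg_of_mul_nonneg_right (by linarith) (sub_pos.2 hlt)
  exact ⟨hprob, hinv, (hφ.integral_eq_zero_iff hX.2.1.measurableSet).1 hzero, by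
    rwa [hzero, mul_zero, add_zero] at heq'⟩

lemma exists_pos_le_of_mem_frozenSet (hφ : IsPenalty X₀ φ) (hX : IsSubshift1 X₀)
    (hproper : X₀ ≠ Set.univ) : ∃ b, 0 < b ∧ ∀ β ∈ frozenSet X₀ φ, b ≤ β := by
  obtain ⟨x, -⟩ := hX.1
  obtain ⟨μ, hprob, hinv, -, hent⟩ := exists_isMME1 (X₀ := (Set.univ : Set (Cfg1 A)))
    ⟨⟨x, trivial⟩, isClosed_univ, fun _ _ => trivial⟩
  have hgap := topEnt1_lt_topEnt1_univ hX hproper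
  have hneg : ∫ x, φ x ∂μ < 0 := (hφ.integral_nonpos μ).lt_of_ne fun hzero => by
    have hone := (hφ.integral_eq_zero_iff hX.2.1.measurableSet).1 hzero
    exact (entropy1_le_topEnt1 hX.2.1.measurableSet hone).not_gt (hent ▸ hgap)
  refine ⟨(topEnt1 Set.univ - topEnt1 X₀) / -∫ x, φ x ∂μ,
    div_pos (sub_pos.2 hgap) (neg_pos.2 hneg), fun β hβ => ?_⟩
  rw [div_le_iff₀ (neg_pos.2 hneg)]
  linarith [(mem_frozenSet_iff hφ hX).1 hβ μ hprob hinv]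

lemma isMME1_of_forall_tendsto_integral (hX : IsClosed X₀) {μs : ℕ → Measure (Cfg1 A)}
    {μ : Measure (Cfg1 A)} (hprob : IsProbabilityMeasure μ) (hinv : Invariant1 μ)
    (hμs : ∀ᶠ k in atTop, IsMME1 X₀ (μs k))
    (hlim : ∀ f : Cfg1 A → ℝ, Continuous f →
      Tendsto (fun k => ∫ x, f x ∂(μs k)) atTop (𝓝 (∫ x, f x ∂μ))) : IsMME1 X₀ μ := by
  obtain ⟨K, hK⟩ := eventually_atTop.1 hμs
  have hMME (k : ℕ) : IsMME1 X₀ (μs (k + K)) := hK _ (Nat.le_add_left K k)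
  let νs (k : ℕ) : ProbabilityMeasure (Cfg1 A) := ⟨μs (k + K), (hMME k).1⟩
  have hνs : Tendsto νs atTop (𝓝 ⟨μ, hprob⟩) :=
    ProbabilityMeasure.tendsto_iff_forall_integral_tendsto.2 fun f =>
      (tendsto_add_atTop_iff_nat K).2 (hlim f f.continuous)
  refine isMME1_of_tendsto hX hνs hinv (.of_forall fun k => (hMME k).2.2.1)
    fun q _ c hc => .of_forall fun k => hc.le.trans ?_
  rw [← (hMME k).2.2.2]
  exact nat_mul_entropy1_le (νs k : Measure (Cfg1 A)) q

lemma ZTA1_eq_of_ES1_eq (hX : IsClosed X₀) {b : ℝ}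
    (hES : ∀ β, b < β → ES1 φ β = {μ | IsMME1 X₀ μ}) : ZTA1 φ = {μ | IsMME1 X₀ μ} := by
  ext μ
  constructor
  · rintro ⟨hprob, hinv, β, μs, hβ, hμs, hlim⟩
    refine isMME1_of_forall_tendsto_integral hX hprob hinv ?_ hlim
    filter_upwards [hβ.eventually_gt_atTop b] with k hk
    exact (hES _ hk).subset (hμs k)
  · intro hμ
    refine ⟨hμ.1, hμ.2.1, fun k => b + (k + 1), fun _ => μ, ?_, fun k => ?_,
      fun _ _ => tendsto_const_nhds⟩
    · exact tendsto_atTop_add_const_left _ _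
        (tendsto_atTop_add_const_right _ _ tendsto_natCast_atTop_atTop)
    · rw [hES _ (lt_add_of_pos_right b k.cast_add_one_pos)]
      exact hμ

theorem exists_freezingPT1_of_frozenSet_nonempty (hφ : IsPenalty X₀ φ) (hX : IsSubshift1 X₀)
    (hproper : X₀ ≠ Set.univ) (hfrozen : (frozenSet X₀ φ).Nonempty) :
    ∃ βc : ℝ, 0 < βc ∧ FreezingPT1 φ βc ∧ ZTA1 φ = {μ | IsMME1 X₀ μ} := by
  obtain ⟨b, hb, hle⟩ := exists_pos_le_of_mem_frozenSet hφ hX hproper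
  have hES (β : ℝ) (hβ : sInf (frozenSet X₀ φ) < β) : ES1 φ β = {μ | IsMME1 X₀ μ} := by
    obtain ⟨β₀, hβ₀, hlt⟩ := exists_lt_of_csInf_lt hfrozen hβ
    exact ES1_eq_of_lt hφ hX hβ₀ hlt
  refine ⟨sInf (frozenSet X₀ φ), hb.trans_le (le_csInf hfrozen hle),
    ⟨fun β β' hβ hβ' => (hES β hβ).trans (hES β' hβ').symm, fun β β' hβ hβ' heq => ?_⟩,
    ZTA1_eq_of_ES1_eq hX.2.1 hES⟩
  obtain ⟨μ, hμ⟩ := exists_isMME1 hX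
  have hmem : μ ∈ ES1 φ β := by rwa [heq, hES β' hβ']
  exact hβ.not_ge (csInf_le ⟨b, hle⟩ ((hμ.mem_ES1_iff hφ hX).1 hmem))

end Freezing

section FrozenDistancePotential

variable {A : Type} [Fintype A] {X₀ : Set (Cfg1 A)} {a : ℕ → ℝ} {φ ψ : Cfg1 A → ℝ} {c : ℝ}

lemma entropy1_add_integral_le_of_partitionFunction_le [MeasurableSpace A]
    [MeasurableSingletonClass A] [Nonempty A] {μ : Measure (Cfg1 A)} [IsProbabilityMeasure μ]
    (hμ : Invariant1 μ) (hψ : Integrable ψ μ) (hbdd : BddAbove (Set.range ψ)) {D θ : ℝ}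
    (hD : ∀ n : ℕ, partitionFunction ψ (Set.univ : Set (Fin n → A)) ≤ D * Real.exp (n * θ)) :
    entropy1 μ + ∫ x, ψ x ∂μ ≤ θ := by
  have hDpos : 0 < D := by
    simpa using (partitionFunction_univ_pos ψ 0).trans_le (hD 0)
  have hlim : Tendsto (fun n : ℕ => Real.log D / n + θ) atTop (𝓝 θ) := by
    simpa using (tendsto_const_div_atTop_nhds_zero_nat (Real.log D)).add_const θ
  refine ge_of_tendsto hlim ?_
  filter_upwards [eventually_gt_atTop 0] with n hn
  have hn' : (0 : ℝ) < n := mod_cast hn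
  have hlog := (mul_entropy1_add_integral_le_log_partitionFunction hμ hψ hbdd n).trans
    (Real.log_le_log (partitionFunction_univ_pos ψ n) (hD n))
  rw [Real.log_mul hDpos.ne' (Real.exp_ne_zero _), Real.log_exp] at hlog
  rw [div_add' _ _ _ hn'.ne', le_div_iff₀' hn', mul_comm θ]
  exact hlog

variable [TopologicalSpace A] [DiscreteTopology A] [MeasurableSpace A] [BorelSpace A]

lemma mem_frozenSet_of_le (hφ : IsDistancePotential X₀ a φ) (hX : IsSubshift1 X₀)
    (ha : Antitone a) (hpos : ∀ j, 0 < a j) {β : ℝ} (hβ : 0 ≤ β)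
    (h0 : Nat.card A * Real.exp (-(β * a 0)) ≤ 1 / 4)
    (hm : ∀ m, 1 ≤ m → (m + 2) * Real.log 2 + entropyExcess X₀ m
      ≤ (2 ^ m - 1 : ℕ) * (β * a (3 * (2 ^ m - 1)))) : β ∈ frozenSet X₀ φ := by
  have hpen := hφ.isPenalty hX ha hpos
  have := hX.nonempty_alphabet
  have hβφ (x : Cfg1 A) : β * φ x ≤ 0 := mul_nonpos_of_nonneg_of_nonpos hβ (hpen.nonpos x)
  refine (mem_frozenSet_iff hpen hX).2 fun μ hprob hinv => le_of_forall_gt_imp_ge_of_dense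
    fun θ hθ => ?_
  obtain ⟨D, -, hD⟩ := exists_partitionFunction_le hX (hφ.const_mul β) (ha.const_mul hβ) hβφ
    hθ h0 hm
  rw [← integral_const_mul]
  exact entropy1_add_integral_le_of_partitionFunction_le hinv (hpen.integrable.const_mul β)
    ⟨0, Set.forall_mem_range.2 hβφ⟩ hD

lemma frozenSet_nonempty (hφ : IsDistancePotential X₀ a φ) (hX : IsSubshift1 X₀)
    (ha : Antitone a) (hpos : ∀ j, 0 < a j) (hc : 0 < c)
    (hm : ∀ m : ℕ, 1 ≤ m →
      c * (m + entropyExcess X₀ m) ≤ (2 ^ m - 1 : ℕ) * a (3 * (2 ^ m - 1))) :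
    (frozenSet X₀ φ).Nonempty := by
  have hdecay : Tendsto (fun β : ℝ => Nat.card A * Real.exp (-(β * a 0))) atTop (𝓝 0) := by
    simpa using (Real.tendsto_exp_neg_atTop_nhds_zero.comp
      (tendsto_id.atTop_mul_const (hpos 0))).const_mul (Nat.card A : ℝ)
  obtain ⟨β, h0, hβ⟩ := ((hdecay.eventually_le_const (by norm_num : (0 : ℝ) < 1 / 4)).and
    (eventually_ge_atTop (3 / c))).exists
  have hβ0 : 0 ≤ β := (by positivity : 0 ≤ 3 / c).trans hβ
  refine ⟨β, mem_frozenSet_of_le hφ hX ha hpos hβ0 h0 fun m hm1 => ?_⟩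
  have hm1' : (1 : ℝ) ≤ m := mod_cast hm1
  have hexcess := entropyExcess_nonneg X₀ m
  calc (m + 2) * Real.log 2 + entropyExcess X₀ m
      ≤ (m + 2) * 1 + entropyExcess X₀ m := by gcongr; linarith [Real.log_two_lt_d9]
    _ ≤ 3 * (m + entropyExcess X₀ m) := by linarith
    _ ≤ β * c * (m + entropyExcess X₀ m) := by gcongr; exact (div_le_iff₀ hc).1 hβ
    _ ≤ β * ((2 ^ m - 1 : ℕ) * a (3 * (2 ^ m - 1))) := by
        rw [mul_assoc]
        exact mul_le_mul_of_nonneg_left (hm m hm1) hβ0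
    _ = (2 ^ m - 1 : ℕ) * (β * a (3 * (2 ^ m - 1))) := mul_left_comm _ _ _

theorem statement12_general (hX : IsSubshift1 X₀) (hproper : X₀ ≠ Set.univ)
    (hpos : ∀ j, 0 < a j) (ha : Antitone a) (hc : 0 < c)
    (hm : ∀ m : ℕ, 1 ≤ m →
      c * (m + entropyExcess X₀ m) ≤ (2 ^ m - 1 : ℕ) * a (3 * (2 ^ m - 1)))
    (hφ : IsDistancePotential X₀ a φ) :
    ∃ βc : ℝ, 0 < βc ∧ FreezingPT1 φ βc ∧ ZTA1 φ = { μ | IsMME1 X₀ μ } :=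
  exists_freezingPT1_of_frozenSet_nonempty (hφ.isPenalty hX ha hpos) hX hproper
    (frozenSet_nonempty hφ hX ha hpos hc hm)

end FrozenDistancePotential

section GrowthCondition

lemma natCast_le_two_mul_log_two_pow_sub_one_add_one {m : ℕ} (hm : 1 ≤ m) :
    (m : ℝ) ≤ 2 * Real.log (2 ^ m - 1 : ℕ) + 1 := by
  obtain ⟨k, rfl⟩ := Nat.exists_eq_add_of_le' hm
  have hpow : ((2 ^ k : ℕ) : ℝ) ≤ (2 ^ (k + 1) - 1 : ℕ) :=
    Nat.cast_le.2 (by have := Nat.two_pow_pos k; lia)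
  have hlog := Real.log_le_log (by positivity) hpow
  rw [Nat.cast_pow, Real.log_pow, Nat.cast_ofNat] at hlog
  have hk : (k : ℝ) * (1 / 2) ≤ k * Real.log 2 := by gcongr; linarith [Real.log_two_gt_d9]
  push_cast at hlog ⊢
  linarith

lemma natCast_add_entropyExcess_le {A : Type} {X₀ : Set (Cfg1 A)} {a : ℕ → ℝ}
    (ha : ∀ j : ℕ, 1 ≤ j → 2 * Real.log j / j
      + (j : ℝ)⁻¹ * entropyExcess X₀ (Nat.log 2 j + 1) + (j : ℝ)⁻¹ ≤ a (3 * j))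
    {m : ℕ} (hm : 1 ≤ m) :
    m + entropyExcess X₀ m ≤ (2 ^ m - 1 : ℕ) * a (3 * (2 ^ m - 1)) := by
  have hlt : m < 2 ^ m := Nat.lt_two_pow_self
  have hj : 1 ≤ 2 ^ m - 1 := by lia
  have hlog : Nat.log 2 (2 ^ m - 1) + 1 = m := by
    have hpow : 2 ^ m = 2 ^ (m - 1) * 2 := (Nat.pow_pred_mul hm).symm
    rw [(Nat.log_eq_iff (m := m - 1) (.inr ⟨one_lt_two, by lia⟩)).2
      ⟨by lia, by rw [Nat.sub_add_cancel hm]; lia⟩, Nat.sub_add_cancel hm]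
  have hgrowth := ha _ hj
  rw [hlog, inv_mul_eq_div, inv_eq_one_div, ← add_div, ← add_div,
    div_le_iff₀' (Nat.cast_pos.2 hj)] at hgrowth
  linarith [natCast_le_two_mul_log_two_pow_sub_one_add_one hm]

end GrowthCondition

/-- **Theorem 5.3, one-sided subshifts.** Let `X₀⁺` be a proper subshift of
`X⁺ = 𝒜^ℕ`, `κ_i = 2^{-i} log |L_{2^i}(X₀⁺)| - h_top(X₀⁺)`, and `(a_j)` a decreasing positive
null sequence with `a_{3j} ≥ (2 log j)/j + (1/j) Σ_{i ≤ ⌊log₂ j⌋} 2^i κ_i + 1/j`. Then the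
potential `φ⁺` (vanishing on `X₀⁺`, equal to `-a_j` where `dist(x, X₀⁺) = 2^{-j}`) has a
freezing phase transition at some `β_c > 0`, and `ZTA(φ⁺)` is the set of measures of maximal
entropy of `X₀⁺`. -/
theorem statement12 (A : Type) [Fintype A] [TopologicalSpace A] [DiscreteTopology A]
    [MeasurableSpace A] [BorelSpace A]
    (X₀ : Set (Cfg1 A)) (hsub : IsSubshift1 X₀) (hproper : X₀ ≠ Set.univ)
    (a : ℕ → ℝ) (hpos : ∀ j, 0 < a j) (hdec : Antitone a)
    (hlim : Tendsto a atTop (𝓝 0))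
    (ha : ∀ j : ℕ, 1 ≤ j →
      2 * Real.log j / j
        + (j : ℝ)⁻¹ * ∑ i ∈ Finset.range (Nat.log 2 j + 1),
            (2 : ℝ) ^ i * (((2 : ℝ) ^ i)⁻¹ * Real.log ((lang1 X₀ (2 ^ i)).ncard)
              - topEnt1 X₀)
        + (j : ℝ)⁻¹ ≤ a (3 * j))
    (φ : Cfg1 A → ℝ)
    (hφ0 : ∀ x ∈ X₀, φ x = 0)
    (hφ1 : ∀ x ∉ X₀, ∀ j : ℕ, distToSub1 X₀ x = (2 : ℝ) ^ (-(j : ℤ)) → φ x = -(a j)) :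
    ∃ βc : ℝ, 0 < βc ∧ FreezingPT1 φ βc ∧ ZTA1 φ = { μ | IsMME1 X₀ μ } := by
  exact statement12_general hsub hproper hpos hdec one_pos
    (fun m hm => (one_mul _).trans_le (natCast_add_entropyExcess_le ha hm)) ⟨hφ0, hφ1⟩

end Freezing
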